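/- Let p > 1 and let q ≤ 0 be continuous and single-barrier on [0,1] (i.e., increasing on [0, x_0] and decreasing on [x_0, 1] for some x_0 ∈ [0,1]). Let λ_1 < λ_2 < ... be the eigenvalues of the Dirichlet problem -((y')^{(p-1)})' = (p-1)(λ - q(x)) y^{(p-1)}, y(0) = y(1) = 0. Then for n > m with λ_n > λ_m ≥ -2q*, where q* = min{q(0), q(1)}, one has λ_n / λ_m ≥ n^p / m^p. -/

import Mathlib

/-- λ is a Dirichlet eigenvalue of -((y')^{(p-1)})' = (p-1)(λ - q) y^{(p-1)} on [a,b]. -/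
def IsDirichletEigenvalue (p : ℝ) (q : ℝ → ℝ) (a b lam : ℝ) : Prop :=
  ∃ y yd : ℝ → ℝ,
    (∃ x ∈ Set.Icc a b, y x ≠ 0) ∧
    (∀ x ∈ Set.Icc a b, HasDerivAt y (yd x) x) ∧
    (∀ x ∈ Set.Icc a b, HasDerivAt (fun t => |yd t| ^ (p - 2) * yd t)
      (-(p - 1) * (lam - q x) * (|y x| ^ (p - 2) * y x)) x) ∧
    y a = 0 ∧ y b = 0

open Set Filter Topology

/-- The odd power `x ↦ |x| ^ (r - 2) * x` of degree `r - 1`. -/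
noncomputable def signedPow (r x : ℝ) : ℝ := |x| ^ (r - 2) * x

section SignedPow

variable {p q : ℝ}

theorem signedPow_zero (r : ℝ) : signedPow r 0 = 0 := by simp [signedPow]

theorem signedPow_neg (r x : ℝ) : signedPow r (-x) = -signedPow r x := by simp [signedPow]

theorem signedPow_of_nonneg (hp : 1 < p) {x : ℝ} (hx : 0 ≤ x) : signedPow p x = x ^ (p - 1) := by
  rcases hx.eq_or_lt with rfl | hx
  · rw [signedPow_zero, Real.zero_rpow (by linarith)]
  · rw [signedPow, abs_of_pos hx, ← Real.rpow_add_one hx.ne']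
    congr 1; ring

theorem signedPow_nonneg (r : ℝ) {x : ℝ} (hx : 0 ≤ x) : 0 ≤ signedPow r x := by
  unfold signedPow; positivity

theorem abs_signedPow (hp : 1 < p) (x : ℝ) : |signedPow p x| = |x| ^ (p - 1) := by
  rw [← signedPow_of_nonneg hp (abs_nonneg x), signedPow, signedPow, abs_mul, abs_abs,
    abs_of_nonneg (by positivity : 0 ≤ |x| ^ (p - 2))]

theorem signedPow_mul_self (hp : 1 < p) (x : ℝ) : signedPow p x * x = |x| ^ p := by
  rcases eq_or_ne x 0 with rfl | hx
  · rw [mul_zero, abs_zero, Real.zero_rpow (by linarith)]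
  · have h : 0 < |x| := abs_pos.2 hx
    rw [signedPow, mul_assoc, ← abs_mul_abs_self, ← mul_assoc, ← Real.rpow_add_one h.ne',
      ← Real.rpow_add_one h.ne']
    congr 1; ring

theorem signedPow_mul {c : ℝ} (hp : 1 < p) (hc : 0 ≤ c) (x : ℝ) :
    signedPow p (c * x) = c ^ (p - 1) * signedPow p x := by
  rw [← signedPow_of_nonneg hp hc, signedPow, signedPow, signedPow, abs_mul,
    Real.mul_rpow (abs_nonneg _) (abs_nonneg _)]
  ring

theorem abs_signedPow_rpow (h : p.HolderConjugate q) (x : ℝ) : |signedPow p x| ^ q = |x| ^ p := by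
  rw [abs_signedPow h.lt, ← Real.rpow_mul (abs_nonneg x), h.sub_one_mul_conj]

theorem signedPow_signedPow (h : p.HolderConjugate q) (x : ℝ) :
    signedPow q (signedPow p x) = x := by
  have key : ∀ y : ℝ, 0 ≤ y → signedPow q (signedPow p y) = y := fun y hy ↦ by
    rw [signedPow_of_nonneg h.symm.lt (signedPow_nonneg p hy), signedPow_of_nonneg h.lt hy,
      ← Real.rpow_mul hy, (by nlinarith [h.sub_one_mul_conj, h.mul_eq_add] : (p - 1) * (q - 1) = 1),
      Real.rpow_one]
  rcases le_total 0 x with hx | hx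
  · exact key x hx
  · have := key (-x) (by linarith)
    rw [signedPow_neg, signedPow_neg] at this
    linarith

theorem hasDerivAt_abs_rpow_signedPow (hp : 1 < p) (x : ℝ) :
    HasDerivAt (fun t : ℝ ↦ |t| ^ p) (p * signedPow p x) x := by
  simpa [signedPow, mul_assoc] using hasDerivAt_abs_rpow x hp

theorem HasDerivAt.abs_rpow_signedPow (hp : 1 < p) {f : ℝ → ℝ} {f' x : ℝ}
    (hf : HasDerivAt f f' x) :
    HasDerivAt (fun t : ℝ ↦ |f t| ^ p) (p * signedPow p (f x) * f') x :=
  (hasDerivAt_abs_rpow_signedPow hp (f x)).comp x hf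

theorem continuous_signedPow (hp : 1 < p) : Continuous (signedPow p) := by
  have h := (contDiff_norm_rpow (E := ℝ) hp).continuous_deriv le_rfl
  have h2 : deriv (fun x : ℝ ↦ ‖x‖ ^ p) = fun x ↦ p * signedPow p x :=
    funext fun x ↦ (hasDerivAt_abs_rpow_signedPow hp x).deriv
  rw [h2] at h
  have h3 : signedPow p = fun x ↦ p⁻¹ * (p * signedPow p x) := by
    funext x; field_simp
  rw [h3]
  exact continuous_const.mul h

theorem continuous_abs_rpow (hp : 1 < p) : Continuous fun x : ℝ ↦ |x| ^ p :=
  continuous_abs.rpow_const fun _ ↦ Or.inr (by linarith)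

theorem signedPow_monotoneOn (hp : 1 < p) : MonotoneOn (signedPow p) (Ici 0) := by
  intro x hx y hy hxy
  rw [signedPow_of_nonneg hp hx, signedPow_of_nonneg hp hy]
  exact Real.rpow_le_rpow hx hxy (by linarith)

end SignedPow

/-- A generalized sine `S` with derivative `C` for the exponent `p`: the solution of
`(|C| ^ (p - 2) C)' = -(p - 1) |S| ^ (p - 2) S`, `S' = C` with `S 0 = 0`, `C 0 = 1`,
together with its half period. -/
structure GeneralizedSine (p : ℝ) where
  S : ℝ → ℝ
  C : ℝ → ℝ
  halfPeriod : ℝ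
  halfPeriod_pos : 0 < halfPeriod
  S_zero : S 0 = 0
  C_zero : C 0 = 1
  hasDerivAt_S : ∀ t, HasDerivAt S (C t) t
  hasDerivAt_signedPow_C : ∀ t,
    HasDerivAt (fun u ↦ signedPow p (C u)) (-((p - 1) * signedPow p (S t))) t
  pythagoras : ∀ t, |S t| ^ p + |C t| ^ p = 1
  S_eq_zero : ∀ t, S t = 0 → ∃ k : ℤ, t = k * halfPeriod
  S_add : ∀ t, S (t + halfPeriod) = -S t
  C_add : ∀ t, C (t + halfPeriod) = -C t
  S_neg : ∀ t, S (-t) = -S t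
  C_neg : ∀ t, C (-t) = C t
  S_nonneg : ∀ t ∈ Icc 0 (halfPeriod / 2), 0 ≤ S t
  C_nonneg : ∀ t ∈ Icc 0 (halfPeriod / 2), 0 ≤ C t
  C_half : C (halfPeriod / 2) = 0

namespace GeneralizedSine

section Construction

open Real

variable (p q : ℝ)

/-- The weighted-homogeneous norm of the point `(cos φ, sin φ)`. -/
noncomputable def circleNorm (φ : ℝ) : ℝ := |sin φ| ^ p + |cos φ| ^ q

/-- The speed of the generalized angle with respect to the angle `φ`. -/
noncomputable def speed (φ : ℝ) : ℝ :=
  (cos φ ^ 2 + sin φ ^ 2 / (p - 1)) / circleNorm p q φ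

/-- The generalized angle as a function of the angle `φ`. -/
noncomputable def angle (φ : ℝ) : ℝ := ∫ t in (0 : ℝ)..φ, speed p q t

/-- The generalized sine as a function of the angle `φ`. -/
noncomputable def sineOfAngle (φ : ℝ) : ℝ := circleNorm p q φ ^ (-(1 / p)) * sin φ

/-- The generalized cosine as a function of the angle `φ`. -/
noncomputable def cosineOfAngle (φ : ℝ) : ℝ :=
  circleNorm p q φ ^ (-(1 / p)) * signedPow q (cos φ)

variable {p q}

theorem circleNorm_pos (φ : ℝ) : 0 < circleNorm p q φ := by
  unfold circleNorm
  rcases eq_or_ne (sin φ) 0 with h | h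
  · have : cos φ ≠ 0 := fun h' ↦ by simpa [h, h'] using sin_sq_add_cos_sq φ
    positivity
  · positivity

theorem circleNorm_le (h : p.HolderConjugate q) (φ : ℝ) : circleNorm p q φ ≤ 2 := by
  have h1 : |sin φ| ^ p ≤ 1 :=
    rpow_le_one (abs_nonneg _) (abs_sin_le_one φ) h.pos.le
  have h2 : |cos φ| ^ q ≤ 1 :=
    rpow_le_one (abs_nonneg _) (abs_cos_le_one φ) h.symm.pos.le
  unfold circleNorm; linarith

theorem continuous_circleNorm (h : p.HolderConjugate q) : Continuous (circleNorm p q) :=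
  ((continuous_abs_rpow h.lt).comp continuous_sin).add
    ((continuous_abs_rpow h.symm.lt).comp continuous_cos)

theorem continuous_speed (h : p.HolderConjugate q) : Continuous (speed p q) :=
  Continuous.div (by fun_prop) (continuous_circleNorm h) fun φ ↦ (circleNorm_pos φ).ne'

theorem speed_ge (h : p.HolderConjugate q) :
    ∃ c > 0, ∀ φ, c ≤ speed p q φ := by
  have hp := h.lt
  have hp1 : 0 < p - 1 := by linarith
  refine ⟨min 1 (1 / (p - 1)) / 2, by positivity, fun φ ↦ ?_⟩
  have hm1 : min 1 (1 / (p - 1)) ≤ 1 := min_le_left _ _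
  have hm2 : min 1 (1 / (p - 1)) ≤ 1 / (p - 1) := min_le_right _ _
  have hm : 0 ≤ min 1 (1 / (p - 1)) := le_min zero_le_one (by
    have : 0 < p - 1 := by linarith
    positivity)
  have h1 : min 1 (1 / (p - 1)) ≤ cos φ ^ 2 + sin φ ^ 2 / (p - 1) := by
    have e : sin φ ^ 2 / (p - 1) = sin φ ^ 2 * (1 / (p - 1)) := by ring
    rw [e]
    nlinarith [sin_sq_add_cos_sq φ, mul_nonneg (sq_nonneg (sin φ)) (sub_nonneg.2 hm2),
      mul_nonneg (sq_nonneg (cos φ)) (sub_nonneg.2 hm1)]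
  unfold speed
  rw [le_div_iff₀ (circleNorm_pos φ)]
  calc _ ≤ min 1 (1 / (p - 1)) / 2 * 2 := by
        gcongr; exact circleNorm_le h φ
    _ ≤ _ := by linarith

theorem speed_pos (h : p.HolderConjugate q) (φ : ℝ) : 0 < speed p q φ := by
  obtain ⟨c, hc, H⟩ := speed_ge h
  exact hc.trans_le (H φ)

theorem hasDerivAt_angle (h : p.HolderConjugate q) (φ : ℝ) :
    HasDerivAt (angle p q) (speed p q φ) φ :=
  intervalIntegral.integral_hasDerivAt_right ((continuous_speed h).intervalIntegrable _ _)
    ((continuous_speed h).stronglyMeasurableAtFilter _ _) (continuous_speed h).continuousAt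

theorem strictMono_angle (h : p.HolderConjugate q) : StrictMono (angle p q) :=
  strictMono_of_deriv_pos fun φ ↦ by rw [(hasDerivAt_angle h φ).deriv]; exact speed_pos h φ

theorem angle_zero : angle p q 0 = 0 := by simp [angle]

theorem continuous_angle (h : p.HolderConjugate q) : Continuous (angle p q) :=
  continuous_iff_continuousAt.2 fun φ ↦ (hasDerivAt_angle h φ).continuousAt

theorem angle_neg (φ : ℝ) : angle p q (-φ) = -angle p q φ := by
  have h1 : ∀ t, speed p q (-t) = speed p q t := fun t ↦ by simp [speed, circleNorm]
  have h2 := intervalIntegral.integral_comp_neg (a := 0) (b := φ) (speed p q)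
  simp only [h1, neg_zero] at h2
  rw [angle, angle, h2, intervalIntegral.integral_symm]

theorem surjective_angle (h : p.HolderConjugate q) : Function.Surjective (angle p q) := by
  obtain ⟨c, hc, H⟩ := speed_ge h
  have hle : ∀ φ, 0 ≤ φ → c * φ ≤ angle p q φ := by
    intro φ hφ
    have := Convex.mul_sub_le_image_sub_of_le_deriv (convex_univ (𝕜 := ℝ) (E := ℝ))
      (continuous_angle h).continuousOn
      (fun x _ ↦ (hasDerivAt_angle h x).differentiableAt.differentiableWithinAt) (C := c)
      (fun x _ ↦ by rw [(hasDerivAt_angle h x).deriv]; exact H x) 0 (mem_univ _) φ (mem_univ _) hφ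
    rwa [angle_zero, sub_zero, sub_zero] at this
  have htop : Tendsto (angle p q) atTop atTop :=
    tendsto_atTop_mono' _ (eventually_ge_atTop 0 |>.mono hle) (tendsto_id.const_mul_atTop hc)
  refine (continuous_angle h).surjective htop ?_
  have := tendsto_neg_atTop_atBot.comp (htop.comp tendsto_neg_atBot_atTop)
  refine this.congr fun φ ↦ ?_
  simp [angle_neg]

theorem angle_add_pi (h : p.HolderConjugate q) (φ : ℝ) :
    angle p q (φ + π) = angle p q φ + angle p q π := by
  have hper : Function.Periodic (speed p q) π := fun t ↦ by simp [speed, circleNorm]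
  have := hper.intervalIntegral_add_eq_add 0 φ
    fun _ _ ↦ (continuous_speed h).intervalIntegrable _ _
  rwa [zero_add] at this

theorem angle_int_mul_pi (h : p.HolderConjugate q) (k : ℤ) :
    angle p q (k * π) = k * angle p q π := by
  induction k with
  | zero => simp [angle_zero]
  | succ i hi =>
    have := angle_add_pi h (i * π)
    push_cast at hi ⊢
    rw [add_mul, one_mul, this, hi]; ring
  | pred i hi =>
    have := angle_add_pi h ((-(i : ℝ) - 1) * π)
    push_cast at hi ⊢
    rw [show (-(i : ℝ) - 1) * π + π = -(i : ℝ) * π by ring, hi] at this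
    linarith

theorem angle_pi_div_two (h : p.HolderConjugate q) : angle p q (π / 2) = angle p q π / 2 := by
  have h1 := angle_add_pi h (-(π / 2))
  rw [angle_neg, show -(π / 2) + π = π / 2 by ring] at h1
  linarith

theorem hasDerivAt_circleNorm (h : p.HolderConjugate q) (φ : ℝ) :
    HasDerivAt (circleNorm p q)
      (p * signedPow p (sin φ) * cos φ + q * signedPow q (cos φ) * (-sin φ)) φ :=
  ((hasDerivAt_sin φ).abs_rpow_signedPow h.lt).add
    ((hasDerivAt_cos φ).abs_rpow_signedPow h.symm.lt)

theorem hasDerivAt_sineOfAngle (h : p.HolderConjugate q) (φ : ℝ) :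
    HasDerivAt (sineOfAngle p q) (cosineOfAngle p q φ * speed p q φ) φ := by
  have hn := circleNorm_pos (p := p) (q := q) φ
  have h1 := ((hasDerivAt_circleNorm h φ).rpow_const (p := -(1 / p)) (Or.inl hn.ne')).mul
    (hasDerivAt_sin φ)
  refine h1.congr_deriv ?_
  have hp := h.lt
  have hp1 : p - 1 ≠ 0 := by linarith
  have hp0 : p ≠ 0 := by linarith
  have hq : q = p / (p - 1) := by have := h.sub_one_mul_conj; field_simp; linarith
  have e1 : signedPow p (sin φ) * sin φ = circleNorm p q φ - signedPow q (cos φ) * cos φ := by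
    rw [signedPow_mul_self h.lt, signedPow_mul_self h.symm.lt, circleNorm]; ring
  rw [cosineOfAngle, speed, rpow_sub_one hn.ne']
  set n := circleNorm p q φ
  set A := n ^ (-(1 / p))
  set U := signedPow q (cos φ)
  have e2 : (p * signedPow p (sin φ) * cos φ + q * U * -sin φ) * sin φ
      = p * (n - U * cos φ) * cos φ - q * U * sin φ ^ 2 := by rw [← e1]; ring
  calc _ = -(1 / p) * (A / n) * ((p * signedPow p (sin φ) * cos φ + q * U * -sin φ) * sin φ)
        + A * cos φ := by ring
    _ = _ := by
      rw [e2, hq]; field_simp; ring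

theorem signedPow_cosineOfAngle (h : p.HolderConjugate q) (φ : ℝ) :
    signedPow p (cosineOfAngle p q φ) = circleNorm p q φ ^ (-(1 / q)) * cos φ := by
  have hn := circleNorm_pos (p := p) (q := q) φ
  rw [cosineOfAngle, signedPow_mul h.lt (by positivity), signedPow_signedPow h.symm,
    ← rpow_mul hn.le]
  congr 2
  have := h.inv_add_inv_eq_one
  have hp := h.pos.ne'
  rw [show 1 / q = q⁻¹ by ring, show q⁻¹ = 1 - p⁻¹ by linarith]
  field_simp

theorem hasDerivAt_signedPow_cosineOfAngle (h : p.HolderConjugate q) (φ : ℝ) :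
    HasDerivAt (fun t ↦ signedPow p (cosineOfAngle p q t))
      (-((p - 1) * signedPow p (sineOfAngle p q φ)) * speed p q φ) φ := by
  have hn := circleNorm_pos (p := p) (q := q) φ
  rw [funext fun t ↦ signedPow_cosineOfAngle h t]
  have h1 := ((hasDerivAt_circleNorm h φ).rpow_const (p := -(1 / q)) (Or.inl hn.ne')).mul
    (hasDerivAt_cos φ)
  refine h1.congr_deriv ?_
  have hp := h.lt
  have hp1 : p - 1 ≠ 0 := by linarith
  have hp0 : p ≠ 0 := by linarith
  have hq : q = p / (p - 1) := by have := h.sub_one_mul_conj; field_simp; linarith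
  have e1 : signedPow q (cos φ) * cos φ = circleNorm p q φ - signedPow p (sin φ) * sin φ := by
    rw [signedPow_mul_self h.lt, signedPow_mul_self h.symm.lt, circleNorm]; ring
  have e3 : signedPow p (sineOfAngle p q φ) =
      circleNorm p q φ ^ (-(1 / q)) * signedPow p (sin φ) := by
    rw [sineOfAngle, signedPow_mul h.lt (by positivity), ← rpow_mul hn.le]
    congr 2
    rw [hq]; field_simp
  rw [e3, speed, rpow_sub_one hn.ne']
  set n := circleNorm p q φ
  set A := n ^ (-(1 / q))
  set U := signedPow p (sin φ)
  have e2 : (p * U * cos φ + q * signedPow q (cos φ) * -sin φ) * cos φ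
      = p * U * cos φ ^ 2 - q * (n - U * sin φ) * sin φ := by rw [← e1]; ring
  calc _ = -(1 / q) * (A / n) * ((p * U * cos φ + q * signedPow q (cos φ) * -sin φ) * cos φ)
        + A * (-sin φ) := by ring
    _ = _ := by
      rw [e2, hq]; field_simp; ring

theorem pythagoras_angle (h : p.HolderConjugate q) (φ : ℝ) :
    |sineOfAngle p q φ| ^ p + |cosineOfAngle p q φ| ^ p = 1 := by
  have hn := circleNorm_pos (p := p) (q := q) φ
  have hA : (circleNorm p q φ ^ (-(1 / p))) ^ p = (circleNorm p q φ)⁻¹ := by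
    rw [← rpow_mul hn.le, show -(1 / p) * p = -1 by have := h.pos.ne'; field_simp, rpow_neg_one]
  rw [sineOfAngle, cosineOfAngle, abs_mul, abs_mul, mul_rpow (abs_nonneg _) (abs_nonneg _),
    mul_rpow (abs_nonneg _) (abs_nonneg _), abs_signedPow_rpow h.symm,
    abs_of_pos (by positivity : 0 < circleNorm p q φ ^ (-(1 / p))), hA, ← mul_add]
  exact inv_mul_cancel₀ hn.ne'

/-- Generalized sines exist for every exponent `p > 1`. -/
theorem nonempty (hp : 1 < p) : Nonempty (GeneralizedSine p) := by
  obtain ⟨q, h⟩ : ∃ q, p.HolderConjugate q := ⟨_, Real.HolderConjugate.conjExponent hp⟩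
  let G : ℝ ≃o ℝ := (strictMono_angle h).orderIsoOfSurjective _ (surjective_angle h)
  have hG : ∀ φ, G φ = angle p q φ := fun _ ↦ rfl
  let P : ℝ → ℝ := G.symm
  have hGP : ∀ t, angle p q (P t) = t := fun t ↦ G.apply_symm_apply t
  have hPG : ∀ φ, P (angle p q φ) = φ := fun t ↦ G.symm_apply_apply t
  have hPmono : Monotone P := G.symm.monotone
  have hP' : ∀ t, HasDerivAt P (speed p q (P t))⁻¹ t := fun t ↦
    HasDerivAt.of_local_left_inverse G.symm.continuous.continuousAt (hasDerivAt_angle h _)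
      (speed_pos h _).ne' (Eventually.of_forall hGP)
  have hPpi : P (angle p q π / 2) = π / 2 := by rw [← angle_pi_div_two h, hPG]
  have hPadd : ∀ t, P (t + angle p q π) = P t + π := fun t ↦ by
    rw [← hPG (P t + π), angle_add_pi h, hGP]
  have hPneg : ∀ t, P (-t) = -P t := fun t ↦ by rw [← hPG (-P t), angle_neg, hGP]
  have hP0 : P 0 = 0 := by rw [← angle_zero (p := p) (q := q), hPG, angle_zero]
  have hmem : ∀ t ∈ Icc 0 (angle p q π / 2), P t ∈ Icc 0 (π / 2) := fun t ht ↦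
    ⟨hP0 ▸ hPmono ht.1, hPpi ▸ hPmono ht.2⟩
  exact ⟨{
    S := fun t ↦ sineOfAngle p q (P t)
    C := fun t ↦ cosineOfAngle p q (P t)
    halfPeriod := angle p q π
    halfPeriod_pos := by
      rw [← angle_zero (p := p) (q := q)]; exact strictMono_angle h pi_pos
    S_zero := by simp [hP0, sineOfAngle]
    C_zero := by
      simp [hP0, cosineOfAngle, circleNorm, signedPow, zero_rpow h.pos.ne']
    hasDerivAt_S := fun t ↦ by
      refine ((hasDerivAt_sineOfAngle h (P t)).comp t (hP' t)).congr_deriv ?_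
      rw [mul_assoc, mul_inv_cancel₀ (speed_pos h _).ne', mul_one]
    hasDerivAt_signedPow_C := fun t ↦ by
      refine ((hasDerivAt_signedPow_cosineOfAngle h (P t)).comp t (hP' t)).congr_deriv ?_
      rw [mul_assoc, mul_inv_cancel₀ (speed_pos h _).ne', mul_one]
    pythagoras := fun t ↦ pythagoras_angle h (P t)
    S_eq_zero := fun t ht ↦ by
      have hs : sin (P t) = 0 := (mul_eq_zero.1 ht).resolve_left
        (rpow_pos_of_pos (circleNorm_pos _) _).ne'
      obtain ⟨k, hk⟩ := sin_eq_zero_iff.1 hs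
      exact ⟨k, by rw [← angle_int_mul_pi h, hk, hGP]⟩
    S_add := fun t ↦ by simp [hPadd, sineOfAngle, circleNorm]
    C_add := fun t ↦ by simp [hPadd, cosineOfAngle, circleNorm, signedPow_neg]
    S_neg := fun t ↦ by simp [hPneg, sineOfAngle, circleNorm]
    C_neg := fun t ↦ by simp [hPneg, cosineOfAngle, circleNorm]
    S_nonneg := fun t ht ↦ mul_nonneg (rpow_nonneg (circleNorm_pos _).le _)
      (sin_nonneg_of_nonneg_of_le_pi (hmem t ht).1 (by linarith [(hmem t ht).2, pi_pos]))
    C_nonneg := fun t ht ↦ mul_nonneg (rpow_nonneg (circleNorm_pos _).le _)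
      (signedPow_nonneg _ (cos_nonneg_of_neg_pi_div_two_le_of_le
        (by linarith [(hmem t ht).1, pi_pos]) (hmem t ht).2))
    C_half := by simp [hPpi, cosineOfAngle, signedPow_zero] }⟩

end Construction

end GeneralizedSine

namespace GeneralizedSine

section Properties

variable {p : ℝ} (T : GeneralizedSine p)

/-- The `p`-th power of the absolute value of the generalized sine. -/
noncomputable def s (t : ℝ) : ℝ := |T.S t| ^ p

/-- The derivative of `s`. -/
noncomputable def ds (t : ℝ) : ℝ := p * (signedPow p (T.S t) * T.C t)

theorem s_nonneg (t : ℝ) : 0 ≤ T.s t := Real.rpow_nonneg (abs_nonneg _) _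

theorem abs_C_rpow (t : ℝ) : |T.C t| ^ p = 1 - T.s t := by
  have := T.pythagoras t
  rw [s]; linarith

theorem s_le_one (t : ℝ) : T.s t ≤ 1 := by
  have := T.abs_C_rpow t
  have := Real.rpow_nonneg (abs_nonneg (T.C t)) p
  linarith

theorem continuous_S : Continuous T.S :=
  continuous_iff_continuousAt.2 fun t ↦ (T.hasDerivAt_S t).continuousAt

theorem continuous_C (hp : 1 < p) : Continuous T.C := by
  have h := Real.HolderConjugate.conjExponent hp
  have h1 : Continuous fun u ↦ signedPow p (T.C u) :=
    continuous_iff_continuousAt.2 fun t ↦ (T.hasDerivAt_signedPow_C t).continuousAt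
  have h2 := (continuous_signedPow h.symm.lt).comp h1
  exact h2.congr fun t ↦ signedPow_signedPow h _

theorem hasDerivAt_s (hp : 1 < p) (t : ℝ) : HasDerivAt T.s (T.ds t) t :=
  ((T.hasDerivAt_S t).abs_rpow_signedPow hp).congr_deriv (mul_assoc _ _ _)

theorem continuous_s (hp : 1 < p) : Continuous T.s :=
  (continuous_abs_rpow hp).comp T.continuous_S

theorem continuous_ds (hp : 1 < p) : Continuous T.ds :=
  continuous_const.mul (((continuous_signedPow hp).comp T.continuous_S).mul (T.continuous_C hp))

theorem abs_S_le_one (hp : 1 < p) (t : ℝ) : |T.S t| ≤ 1 := by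
  by_contra! h
  exact (Real.one_lt_rpow h (by linarith : 0 < p)).not_ge (T.s_le_one t)

theorem abs_C_le_one (hp : 1 < p) (t : ℝ) : |T.C t| ≤ 1 := by
  by_contra! h
  have := Real.one_lt_rpow h (by linarith : 0 < p)
  have h2 := T.abs_C_rpow t
  have h3 := T.s_nonneg t
  linarith

theorem abs_ds_le (hp : 1 < p) (t : ℝ) : |T.ds t| ≤ p := by
  have h1 : |signedPow p (T.S t)| ≤ 1 := by
    rw [abs_signedPow hp]
    exact Real.rpow_le_one (abs_nonneg _) (T.abs_S_le_one hp t) (by linarith)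
  rw [ds, abs_mul, abs_mul, abs_of_pos (by linarith : 0 < p)]
  have := mul_le_one₀ h1 (abs_nonneg _) (T.abs_C_le_one hp t)
  nlinarith

theorem abs_s_sub_le (hp : 1 < p) (a b : ℝ) : |T.s a - T.s b| ≤ p * |a - b| := by
  have := Convex.norm_image_sub_le_of_norm_hasDerivWithin_le (f := T.s) (f' := T.ds) (s := univ)
    (C := p) (fun x _ ↦ (T.hasDerivAt_s hp x).hasDerivWithinAt)
    (fun x _ ↦ by simpa using T.abs_ds_le hp x) convex_univ (mem_univ b) (mem_univ a)
  simpa using this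

theorem s_zero (hp : 1 < p) : T.s 0 = 0 := by
  rw [s, T.S_zero, abs_zero, Real.zero_rpow (by linarith)]

theorem s_half (hp : 1 < p) : T.s (T.halfPeriod / 2) = 1 := by
  have := T.abs_C_rpow (T.halfPeriod / 2)
  rw [T.C_half, abs_zero, Real.zero_rpow (by linarith)] at this
  linarith

theorem s_periodic : Function.Periodic T.s T.halfPeriod := fun t ↦ by
  rw [s, s, T.S_add, abs_neg]

theorem ds_periodic : Function.Periodic T.ds T.halfPeriod := fun t ↦ by
  rw [ds, ds, T.S_add, T.C_add, signedPow_neg, neg_mul_neg]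

theorem s_neg (t : ℝ) : T.s (-t) = T.s t := by rw [s, s, T.S_neg, abs_neg]

theorem ds_neg (t : ℝ) : T.ds (-t) = -T.ds t := by
  rw [ds, ds, T.S_neg, T.C_neg, signedPow_neg]; ring

theorem s_int_mul (hp : 1 < p) (k : ℤ) : T.s (k * T.halfPeriod) = 0 := by
  have := T.s_periodic.int_mul k 0
  rwa [zero_add, T.s_zero hp] at this

theorem s_eq_zero (hp : 1 < p) {t : ℝ} (h : T.s t = 0) : ∃ k : ℤ, t = k * T.halfPeriod :=
  T.S_eq_zero t (by
    have := (Real.rpow_eq_zero (abs_nonneg _) (by linarith)).1 h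
    exact abs_eq_zero.1 this)

theorem ds_nonneg (hp : 1 < p) {t : ℝ} (ht : t ∈ Icc 0 (T.halfPeriod / 2)) : 0 ≤ T.ds t :=
  mul_nonneg (by linarith) (mul_nonneg (signedPow_nonneg _ (T.S_nonneg t ht)) (T.C_nonneg t ht))

theorem C_antitoneOn (hp : 1 < p) : AntitoneOn T.C (Icc 0 (T.halfPeriod / 2)) := by
  have h := Real.HolderConjugate.conjExponent hp
  have hW : AntitoneOn (fun u ↦ signedPow p (T.C u)) (Icc 0 (T.halfPeriod / 2)) := by
    refine antitoneOn_of_deriv_nonpos (convex_Icc _ _)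
      (fun t _ ↦ (T.hasDerivAt_signedPow_C t).continuousAt.continuousWithinAt)
      (fun t _ ↦ (T.hasDerivAt_signedPow_C t).differentiableAt.differentiableWithinAt)
      fun t ht ↦ ?_
    rw [(T.hasDerivAt_signedPow_C t).deriv, neg_nonpos]
    exact mul_nonneg (by linarith) (signedPow_nonneg _ (T.S_nonneg t (interior_subset ht)))
  intro a ha b hb hab
  rw [← signedPow_signedPow h (T.C a), ← signedPow_signedPow h (T.C b)]
  exact signedPow_monotoneOn h.symm.lt (signedPow_nonneg _ (T.C_nonneg b hb))
    (signedPow_nonneg _ (T.C_nonneg a ha)) (hW ha hb hab)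

theorem mul_C_le_S (hp : 1 < p) {t : ℝ} (ht : t ∈ Icc 0 (T.halfPeriod / 2)) :
    t * T.C t ≤ T.S t := by
  have := Convex.mul_sub_le_image_sub_of_le_deriv (convex_Icc 0 t) (f := T.S) (C := T.C t)
    T.continuous_S.continuousOn
    (fun x _ ↦ (T.hasDerivAt_S x).differentiableAt.differentiableWithinAt)
    (fun x hx ↦ by
      have hx := interior_subset hx
      rw [(T.hasDerivAt_S x).deriv]
      exact T.C_antitoneOn hp ⟨hx.1, hx.2.trans ht.2⟩ ht hx.2)
    0 (left_mem_Icc.2 ht.1) t (right_mem_Icc.2 ht.1) ht.1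
  rw [T.S_zero] at this
  linarith

theorem mul_ds_le (hp : 1 < p) {t : ℝ} (ht : |t| ≤ T.halfPeriod / 2) :
    t * T.ds t ≤ p * T.s t := by
  have key : ∀ t ∈ Icc 0 (T.halfPeriod / 2), t * T.ds t ≤ p * T.s t := fun t ht ↦ by
    rw [ds, s, ← signedPow_mul_self hp]
    have h1 := mul_le_mul_of_nonneg_left (T.mul_C_le_S hp ht)
      (signedPow_nonneg p (T.S_nonneg t ht))
    nlinarith
  rcases le_total 0 t with h | h
  · exact key t ⟨h, (le_abs_self t).trans ht⟩
  · have := key (-t) ⟨by linarith, (neg_le_abs t).trans ht⟩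
    rwa [ds_neg, s_neg, neg_mul_neg] at this

theorem sub_mul_ds_le (hp : 1 < p) (k : ℤ) {t : ℝ}
    (ht : |t - k * T.halfPeriod| ≤ T.halfPeriod / 2) :
    (t - k * T.halfPeriod) * T.ds t ≤ p * T.s t := by
  have := T.mul_ds_le hp ht
  rwa [T.ds_periodic.sub_int_mul_eq, T.s_periodic.sub_int_mul_eq] at this

theorem ds_nonneg_right (hp : 1 < p) (k : ℤ) {t : ℝ} (h1 : k * T.halfPeriod ≤ t)
    (h2 : t ≤ k * T.halfPeriod + T.halfPeriod / 2) : 0 ≤ T.ds t := by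
  rw [← T.ds_periodic.sub_int_mul_eq k]
  exact T.ds_nonneg hp ⟨by linarith, by linarith⟩

theorem ds_nonpos_left (hp : 1 < p) (k : ℤ) {t : ℝ} (h1 : t ≤ k * T.halfPeriod)
    (h2 : k * T.halfPeriod - T.halfPeriod / 2 ≤ t) : T.ds t ≤ 0 := by
  rw [← T.ds_periodic.sub_int_mul_eq k]
  have := T.ds_nonneg hp (t := -(t - k * T.halfPeriod)) ⟨by linarith, by linarith⟩
  rw [ds_neg] at this
  linarith

end Properties

end GeneralizedSine

section Comparison

variable {f g f' g' : ℝ → ℝ} {a b K : ℝ}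

/-- If `f' - g' ≤ K (f - g)` wherever `g ≤ f`, then `f` stays below `g`. -/
theorem le_of_deriv_sub_le (hf : ∀ x ∈ Icc a b, HasDerivAt f (f' x) x)
    (hg : ∀ x ∈ Icc a b, HasDerivAt g (g' x) x) (h0 : f a ≤ g a)
    (h : ∀ x ∈ Icc a b, g x ≤ f x → f' x - g' x ≤ K * (f x - g x)) :
    ∀ x ∈ Icc a b, f x ≤ g x := by
  intro x hx
  have key : ∀ ε > 0, f x ≤ g x + ε * Real.exp ((K + 1) * (x - a)) := fun ε hε ↦ by
    have hB : ∀ y ∈ Icc a b, HasDerivAt (fun t ↦ g t + ε * Real.exp ((K + 1) * (t - a)))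
        (g' y + ε * (Real.exp ((K + 1) * (y - a)) * (K + 1))) y := fun y hy ↦ by
      refine (hg y hy).add (HasDerivAt.const_mul ε (HasDerivAt.exp ?_))
      simpa using ((hasDerivAt_id y).sub_const a).const_mul (K + 1)
    refine image_le_of_deriv_right_lt_deriv_boundary'
      (fun y hy ↦ (hf y hy).continuousAt.continuousWithinAt)
      (fun y hy ↦ (hf y (Ico_subset_Icc_self hy)).hasDerivWithinAt) ?_
      (fun y hy ↦ (hB y hy).continuousAt.continuousWithinAt)
      (fun y hy ↦ (hB y (Ico_subset_Icc_self hy)).hasDerivWithinAt) ?_ hx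
    · have := Real.exp_pos ((K + 1) * (a - a))
      nlinarith
    · intro y hy hfy
      have hpos := mul_pos hε (Real.exp_pos ((K + 1) * (y - a)))
      have := h y (Ico_subset_Icc_self hy) (by linarith)
      rw [hfy] at this
      linarith
  refine le_of_forall_pos_le_add fun δ hδ ↦ ?_
  have := key (δ / Real.exp ((K + 1) * (x - a))) (by positivity)
  rwa [div_mul_cancel₀ _ (Real.exp_pos _).ne'] at this

theorem eqOn_of_abs_deriv_sub_le (hf : ∀ x ∈ Icc a b, HasDerivAt f (f' x) x)
    (hg : ∀ x ∈ Icc a b, HasDerivAt g (g' x) x) (h0 : f a = g a)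
    (h : ∀ x ∈ Icc a b, |f' x - g' x| ≤ K * |f x - g x|) : EqOn f g (Icc a b) := by
  intro x hx
  refine le_antisymm (le_of_deriv_sub_le (K := K) hf hg h0.le (fun y hy hgf ↦ ?_) x hx)
    (le_of_deriv_sub_le (K := K) hg hf h0.ge (fun y hy hgf ↦ ?_) x hx)
  · have := h y hy
    rw [abs_of_nonneg (a := f y - g y) (by linarith)] at this
    exact (le_abs_self _).trans this
  · have := h y hy
    rw [abs_sub_comm, abs_sub_comm (f y), abs_of_nonneg (a := g y - f y) (by linarith)] at this
    exact (le_abs_self _).trans this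

end Comparison

theorem ContinuousOn.exists_primitive {k : ℝ → ℝ} {a b : ℝ} (hab : a ≤ b)
    (hk : ContinuousOn k (Icc a b)) :
    ∃ A : ℝ → ℝ, A a = 0 ∧ ∀ x ∈ Icc a b, HasDerivAt A (k x) x := by
  have hc : Continuous (IccExtend hab ((Icc a b).domRestrict k)) :=
    (continuousOn_iff_continuous_domRestrict.1 hk).Icc_extend'
  refine ⟨fun x ↦ ∫ t in a..x, IccExtend hab ((Icc a b).domRestrict k) t, by simp, fun x hx ↦ ?_⟩
  have := intervalIntegral.integral_hasDerivAt_right (hc.intervalIntegrable a x)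
    hc.aestronglyMeasurable.stronglyMeasurableAtFilter hc.continuousAt
  rwa [IccExtend_of_mem _ _ hx] at this

/-- Solvability of the angular equation. -/
theorem GeneralizedSine.exists_angle {p : ℝ} (T : GeneralizedSine p) (hp : 1 < p) (a : ℝ)
    {c : ℝ → ℝ} (hc : ContinuousOn c (Icc 0 1)) :
    ∃ θ : ℝ → ℝ, θ 0 = 0 ∧
      ∀ x ∈ Icc (0 : ℝ) 1, HasDerivAt θ (a + c x * T.s (θ x)) x := by
  set e := IccExtend (zero_le_one' ℝ) ((Icc (0 : ℝ) 1).domRestrict c) with he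
  have hec : Continuous e := (continuousOn_iff_continuous_domRestrict.1 hc).Icc_extend'
  obtain ⟨M, hM⟩ := isCompact_Icc.exists_bound_of_continuousOn hc
  have hM0 : 0 ≤ M := (norm_nonneg _).trans (hM 0 (by simp))
  have heM : ∀ t, |e t| ≤ M := fun t ↦ hM _ (projIcc 0 1 zero_le_one t).2
  have hP : IsPicardLindelof (fun t y ↦ a + e t * T.s y) (tmin := -1) (tmax := 2)
      ⟨0, by norm_num⟩ 0 (2 * (‖a‖₊ + M.toNNReal)) 0 (‖a‖₊ + M.toNNReal)
      (M.toNNReal * p.toNNReal) := by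
    refine ⟨fun t _ ↦ ?_, fun x _ ↦ by fun_prop, fun t _ x _ ↦ ?_, ?_⟩
    · refine LipschitzOnWith.of_dist_le_mul fun x _ y _ ↦ ?_
      rw [Real.dist_eq, Real.dist_eq, NNReal.coe_mul, Real.coe_toNNReal _ hM0,
        Real.coe_toNNReal _ (by linarith)]
      rw [show a + e t * T.s x - (a + e t * T.s y) = e t * (T.s x - T.s y) by ring, abs_mul,
        mul_assoc]
      exact mul_le_mul (heM t) (T.abs_s_sub_le hp x y) (abs_nonneg _) hM0
    · rw [NNReal.coe_add, Real.coe_toNNReal _ hM0, coe_nnnorm]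
      refine (norm_add_le _ _).trans (add_le_add_right ?_ _)
      rw [Real.norm_eq_abs, abs_mul, abs_of_nonneg (T.s_nonneg x)]
      exact (mul_le_of_le_one_right (abs_nonneg _) (T.s_le_one x)).trans (heM t)
    · simp only [NNReal.coe_mul]
      norm_num
      linarith
  obtain ⟨θ, h0, hθ⟩ := hP.exists_eq_forall_mem_Icc_hasDerivWithinAt₀
  refine ⟨θ, h0, fun x hx ↦ ?_⟩
  have := (hθ x ⟨by linarith [hx.1], by linarith [hx.2]⟩).hasDerivAt
    (Icc_mem_nhds (by linarith [hx.1]) (by linarith [hx.2]))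
  rwa [he, IccExtend_of_mem _ _ hx] at this

theorem monotoneOn_Icc_of_hasDerivAt_nonneg {f f' : ℝ → ℝ} {a b : ℝ}
    (hf : ∀ x ∈ Icc a b, HasDerivAt f (f' x) x) (h : ∀ x ∈ Icc a b, 0 ≤ f' x) :
    MonotoneOn f (Icc a b) :=
  monotoneOn_of_hasDerivWithinAt_nonneg (convex_Icc a b)
    (fun x hx ↦ (hf x hx).continuousAt.continuousWithinAt)
    (fun x hx ↦ (hf x (interior_subset hx)).hasDerivWithinAt) (fun x hx ↦ h x (interior_subset hx))

/-- The weighted integral of `ψ s'(ψ) - p s(ψ)` along an angle `ψ` with decreasing potential is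
nonpositive. -/
theorem GeneralizedSine.weighted_integral_nonpos {p : ℝ} (T : GeneralizedSine p) (hp : 1 < p)
    {P ψ R I : ℝ → ℝ} {X z : ℝ} (hz : 0 < z) (hP0 : ∀ x ∈ Icc 0 X, 0 ≤ P x)
    (hP : AntitoneOn P (Icc 0 X)) (hψ0 : ψ 0 = 0)
    (hψ : ∀ x ∈ Icc 0 X, HasDerivAt ψ (z * (1 + P x * T.s (ψ x))) x)
    (hR : ∀ x ∈ Icc 0 X, HasDerivAt R (-(z * P x * T.ds (ψ x) * R x)) x)
    (hRpos : ∀ x ∈ Icc 0 X, 0 < R x) (hI0 : I 0 = 0)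
    (hI : ∀ x ∈ Icc 0 X, HasDerivAt I (P x * R x * (ψ x * T.ds (ψ x) - p * T.s (ψ x))) x) :
    ∀ x ∈ Icc 0 X, I x ≤ 0 := by
  have hmono : MonotoneOn ψ (Icc 0 X) := monotoneOn_Icc_of_hasDerivAt_nonneg hψ fun x hx ↦ by
    have := hP0 x hx
    have := T.s_nonneg (ψ x)
    positivity
  have hψc : ContinuousOn ψ (Icc 0 X) := fun x hx ↦ (hψ x hx).continuousAt.continuousWithinAt
  have hϖ := T.halfPeriod_pos
  have step : ∀ (k : ℕ), ∀ y ∈ Icc 0 X, ∀ x ∈ Icc y X, ψ x ≤ k * T.halfPeriod + T.halfPeriod / 2 →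
      k * T.halfPeriod - T.halfPeriod / 2 ≤ ψ y → I y ≤ 0 → k * R y ≤ k * R x → I x ≤ 0 := by
    intro k y hy x hx hxk hyk hIy hRR
    have hsub : Icc y x ⊆ Icc 0 X := Icc_subset_Icc hy.1 hx.2
    have hanti : AntitoneOn (fun t ↦ I t + k * T.halfPeriod / z * R t) (Icc y x) := by
      have := monotoneOn_Icc_of_hasDerivAt_nonneg (a := y) (b := x)
        (f := fun t ↦ -(I t + k * T.halfPeriod / z * R t))
        (fun t ht ↦ ((hI t (hsub ht)).add ((hR t (hsub ht)).const_mul _)).neg) fun t ht ↦ by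
          have h1 := T.sub_mul_ds_le hp k (t := ψ t) (abs_le.2 <| by
            rw [Int.cast_natCast]
            constructor <;> linarith [hmono hy (hsub ht) ht.1,
              hmono (hsub ht) ⟨hy.1.trans hx.1, hx.2⟩ ht.2])
          rw [Int.cast_natCast] at h1
          have h2 := mul_nonneg (hP0 t (hsub ht)) (hRpos t (hsub ht)).le
          have h3 : k * T.halfPeriod / z * -(z * P t * T.ds (ψ t) * R t) =
              -(P t * R t * (k * T.halfPeriod * T.ds (ψ t))) := by
            field_simp
          rw [h3]
          nlinarith
      exact fun u hu v hv huv ↦ neg_le_neg_iff.1 (this hu hv huv)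
    have h1 := hanti ⟨le_rfl, hx.1⟩ ⟨hx.1, le_rfl⟩ hx.1
    have h2 := mul_le_mul_of_nonneg_left hRR (div_pos hϖ hz).le
    have h3 : ∀ r, k * T.halfPeriod / z * r = T.halfPeriod / z * (k * r) := fun r ↦ by ring
    simp only [h3] at h1
    linarith
  have key : ∀ k : ℕ, ∀ x ∈ Icc 0 X, ψ x ≤ k * T.halfPeriod + T.halfPeriod / 2 → I x ≤ 0 := by
    intro k
    induction k with
    | zero =>
      intro x hx hxk
      exact step 0 0 ⟨le_rfl, hx.1.trans hx.2⟩ x hx hxk (by simp [hψ0]; positivity) hI0.le (by simp)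
    | succ k ih =>
      intro x hx hxk
      rcases le_total (ψ x) (k * T.halfPeriod + T.halfPeriod / 2) with h | h
      · exact ih x hx h
      obtain ⟨y, hy, hyk⟩ := intermediate_value_Icc hx.1
        (hψc.mono (Icc_subset_Icc_right hx.2)) ⟨by rw [hψ0]; positivity, h⟩
      have hyX : y ∈ Icc 0 X := ⟨hy.1, hy.2.trans hx.2⟩
      refine step (k + 1) y hyX x ⟨hy.2, hx.2⟩ hxk (by push_cast; linarith) (ih y hyX hyk.le)
        (mul_le_mul_of_nonneg_left ?_ (by positivity))
      push_cast at hxk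
      obtain ⟨w, hw, hwk, hw'⟩ : ∃ w ∈ Icc y x, ψ w ≤ (k + 1) * T.halfPeriod ∧
          (w = x ∨ ψ w = (k + 1) * T.halfPeriod) := by
        rcases le_total (ψ x) ((k + 1) * T.halfPeriod) with h' | h'
        · exact ⟨x, ⟨hy.2, le_rfl⟩, h', .inl rfl⟩
        · obtain ⟨w, hw, hwk⟩ := intermediate_value_Icc hy.2
            (hψc.mono (Icc_subset_Icc hy.1 hx.2)) ⟨by linarith, h'⟩
          exact ⟨w, hw, hwk.le, .inr hwk⟩
      have hsub : Icc y x ⊆ Icc 0 X := Icc_subset_Icc hy.1 hx.2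
      have hG := monotoneOn_Icc_of_hasDerivAt_nonneg (a := y) (b := x)
        (f := fun t ↦ R t * (1 + P w * T.s (ψ t)))
        (fun t ht ↦ (hR t (hsub ht)).mul
          ((((T.hasDerivAt_s hp _).comp t (hψ t (hsub ht))).const_mul (P w)).const_add 1))
        fun t ht ↦ by
          have hid : -(z * P t * T.ds (ψ t) * R t) * (1 + P w * T.s (ψ t)) +
              R t * (P w * (T.ds (ψ t) * (z * (1 + P t * T.s (ψ t))))) =
              R t * z * (T.ds (ψ t) * (P w - P t)) := by ring
          simp only [hid]
          refine mul_nonneg (mul_nonneg (hRpos t (hsub ht)).le hz.le) ?_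
          rcases le_or_gt t w with htw | htw
          · refine mul_nonneg_of_nonpos_of_nonpos (T.ds_nonpos_left hp (k + 1) ?_ ?_)
              (sub_nonpos.2 (hP (hsub ht) (hsub hw) htw))
            · push_cast
              exact (hmono (hsub ht) (hsub hw) htw).trans hwk
            · push_cast
              linarith [hmono hyX (hsub ht) ht.1]
          · have hw2 := hw'.resolve_left (by rintro rfl; exact absurd ht.2 htw.not_ge)
            refine mul_nonneg (T.ds_nonneg_right hp (k + 1) ?_ ?_)
              (sub_nonneg.2 (hP (hsub hw) (hsub ht) htw.le))
            · push_cast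
              exact hw2.symm.le.trans (hmono (hsub hw) (hsub ht) htw.le)
            · push_cast
              exact (hmono (hsub ht) hx ht.2).trans hxk
      have h1 := hG ⟨le_rfl, hy.2⟩ ⟨hy.2, le_rfl⟩ hy.2
      have hs : T.s (ψ y) = 1 := by
        rw [hyk, ← T.s_half hp, add_comm]
        exact T.s_periodic.nat_mul k _
      simp only [hs] at h1
      have h2 := mul_le_mul_of_nonneg_left (T.s_le_one (ψ x)) (hP0 w (hsub hw))
      have h3 := mul_le_mul_of_nonneg_left h2 (hRpos x hx).le
      refine le_of_mul_le_mul_right (a := 1 + P w) ?_ (by linarith [hP0 w (hsub hw)])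
      linarith
  intro x hx
  obtain ⟨k, hk⟩ := exists_nat_ge (ψ x / T.halfPeriod)
  rw [div_le_iff₀ hϖ] at hk
  exact key k x hx (by linarith)

theorem abs_sub_le_of_abs_deriv_sub_le {f g f' g' : ℝ → ℝ} {a b K η : ℝ} (hK : 0 ≤ K) (hη : 0 ≤ η)
    (hf : ∀ x ∈ Icc a b, HasDerivAt f (f' x) x) (hg : ∀ x ∈ Icc a b, HasDerivAt g (g' x) x)
    (h0 : f a = g a) (h : ∀ x ∈ Icc a b, |f' x - g' x| ≤ K * |f x - g x| + η) :
    ∀ x ∈ Icc a b, |f x - g x| ≤ η * Real.exp ((K + 1) * (x - a)) := by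
  have key : ∀ {u v u' v' : ℝ → ℝ}, (∀ x ∈ Icc a b, HasDerivAt u (u' x) x) →
      (∀ x ∈ Icc a b, HasDerivAt v (v' x) x) → u a = v a →
      (∀ x ∈ Icc a b, |u' x - v' x| ≤ K * |u x - v x| + η) →
      ∀ x ∈ Icc a b, u x ≤ v x + η * Real.exp ((K + 1) * (x - a)) := by
    intro u v u' v' hu hv h0 h
    refine le_of_deriv_sub_le (K := K) hu (fun y hy ↦ (hv y hy).fun_add (HasDerivAt.const_mul η
      (HasDerivAt.exp (((hasDerivAt_id y).sub_const a).const_mul (K + 1))))) (by simp [h0, hη])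
      fun y hy huv ↦ ?_
    have h1 : 1 ≤ Real.exp ((K + 1) * (y - a)) :=
      Real.one_le_exp (mul_nonneg (by linarith) (by linarith [hy.1]))
    have h2 := (le_abs_self _).trans (h y hy)
    have h3 := mul_le_mul_of_nonneg_left h1 hη
    rw [abs_of_nonneg (a := u y - v y) (by linarith)] at h2
    linarith
  intro x hx
  rw [abs_sub_le_iff]
  constructor
  · linarith [key hf hg h0 h x hx]
  · linarith [key hg hf h0.symm (fun y hy ↦ by
      rw [abs_sub_comm, abs_sub_comm (g y)]; exact h y hy) x hx]

namespace GeneralizedSine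

variable {p : ℝ} (T : GeneralizedSine p)

/-- Solutions of the angular equation depend continuously on parameters. -/
theorem continuousOn_angle (hp : 1 < p) {α β γ Q : ℝ → ℝ} {U : Set ℝ} {X : ℝ}
    (hX : 0 ≤ X) (hα : ContinuousOn α U) (hβ : ContinuousOn β U) (hγ : ContinuousOn γ U)
    (hQ : ContinuousOn Q (Icc 0 X)) {θ : ℝ → ℝ → ℝ} (hθ0 : ∀ τ ∈ U, θ τ 0 = 0)
    (hθ : ∀ τ ∈ U, ∀ x ∈ Icc 0 X,
      HasDerivAt (θ τ) (α τ + (β τ + γ τ * Q x) * T.s (θ τ x)) x) :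
    ContinuousOn (fun τ ↦ θ τ X) U := by
  obtain ⟨M, hM⟩ := isCompact_Icc.exists_bound_of_continuousOn hQ
  have hM0 : 0 ≤ M := (norm_nonneg _).trans (hM 0 ⟨le_rfl, hX⟩)
  intro σ hσ
  set K := (|β σ| + |γ σ| * M) * p with hK
  have hK0 : 0 ≤ K := by positivity
  have hlim : Tendsto (fun τ ↦ (|α τ - α σ| + |β τ - β σ| + |γ τ - γ σ| * M) *
      Real.exp ((K + 1) * (X - 0))) (𝓝[U] σ) (𝓝 0) := by
    have h1 : ContinuousWithinAt (fun τ ↦ (|α τ - α σ| + |β τ - β σ| + |γ τ - γ σ| * M) *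
        Real.exp ((K + 1) * (X - 0))) U σ := by
      have := hα σ hσ
      have := hβ σ hσ
      have := hγ σ hσ
      fun_prop
    simpa [ContinuousWithinAt] using h1
  refine tendsto_iff_dist_tendsto_zero.2 (squeeze_zero' (Eventually.of_forall fun _ ↦ dist_nonneg)
    ?_ hlim)
  filter_upwards [self_mem_nhdsWithin] with τ hτ
  refine abs_sub_le_of_abs_deriv_sub_le hK0 (by positivity) (hθ τ hτ) (hθ σ hσ)
    ((hθ0 τ hτ).trans (hθ0 σ hσ).symm) (fun x hx ↦ ?_) X ⟨hX, le_rfl⟩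
  have hid : α τ + (β τ + γ τ * Q x) * T.s (θ τ x) - (α σ + (β σ + γ σ * Q x) * T.s (θ σ x)) =
      (β σ + γ σ * Q x) * (T.s (θ τ x) - T.s (θ σ x)) +
      (α τ - α σ + ((β τ - β σ) + (γ τ - γ σ) * Q x) * T.s (θ τ x)) := by ring
  have hb : ∀ b c : ℝ, |b + c * Q x| ≤ |b| + |c| * M := fun b c ↦ by
    refine (abs_add_le _ _).trans (add_le_add_right ?_ _)
    rw [abs_mul]
    exact mul_le_mul_of_nonneg_left (hM x hx) (abs_nonneg _)
  rw [hid]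
  refine (abs_add_le _ _).trans (add_le_add ?_ ((abs_add_le _ _).trans ?_))
  · rw [abs_mul, hK, mul_assoc]
    exact mul_le_mul (hb _ _) (T.abs_s_sub_le hp _ _) (abs_nonneg _) (by positivity)
  · rw [add_assoc]
    refine add_le_add_right ?_ _
    rw [abs_mul, abs_of_nonneg (T.s_nonneg _)]
    exact (mul_le_of_le_one_right (abs_nonneg _) (T.s_le_one _)).trans (hb _ _)

/-- An infinitesimal form of the monotonicity of the rescaled angle in the frequency. -/
theorem exists_rescaled_angle_le (hp : 1 < p) {Q φ : ℝ → ℝ} {X z : ℝ} (hX : 0 ≤ X) (hz : 0 < z)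
    (hQ0 : ∀ x ∈ Icc 0 X, 0 ≤ Q x) (hQ : AntitoneOn Q (Icc 0 X)) (hQc : ContinuousOn Q (Icc 0 X))
    (hφ0 : φ 0 = 0)
    (hφ : ∀ x ∈ Icc 0 X, HasDerivAt φ (1 + Q x * (z ^ (-p) * T.s (z * φ x))) x) :
    ∃ C ≥ 0, ∀ ε > 0, ∃ δ₀ > 0, ∀ δ ∈ Ioo 0 δ₀, ∀ χ : ℝ → ℝ, χ 0 = 0 →
      (∀ x ∈ Icc 0 X,
        HasDerivAt χ (1 + Q x * ((z + δ) ^ (-p) * T.s ((z + δ) * χ x))) x) →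
      χ X ≤ φ X + δ * (ε * C) := by
  have hφc : ContinuousOn φ (Icc 0 X) := fun x hx ↦ (hφ x hx).continuousAt.continuousWithinAt
  have hs := T.continuous_s hp
  have hds := T.continuous_ds hp
  have hzp : 0 < z ^ (-p) := Real.rpow_pos_of_pos hz _
  have h0X : (0 : ℝ) ∈ Icc 0 X := ⟨le_rfl, hX⟩
  have hXX : X ∈ Icc 0 X := ⟨hX, le_rfl⟩
  obtain ⟨A, hA0, hA⟩ := ContinuousOn.exists_primitive hX
    (k := fun x ↦ -(z * (z ^ (-p) * Q x) * T.ds (z * φ x))) (by fun_prop)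
  set R := fun x ↦ Real.exp (A x) with hR_def
  have hRpos : ∀ x, 0 < R x := fun x ↦ Real.exp_pos _
  have hR : ∀ x ∈ Icc 0 X, HasDerivAt R (-(z * (z ^ (-p) * Q x) * T.ds (z * φ x) * R x)) x :=
    fun x hx ↦ (hA x hx).exp.congr_deriv (by ring)
  have hRc : ContinuousOn R (Icc 0 X) := fun x hx ↦ (hR x hx).continuousAt.continuousWithinAt
  obtain ⟨I, hI0, hI⟩ := ContinuousOn.exists_primitive hX
    (k := fun x ↦ z ^ (-p) * Q x * R x * (z * φ x * T.ds (z * φ x) - p * T.s (z * φ x)))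
    (by fun_prop)
  obtain ⟨J, hJ0, hJ⟩ := ContinuousOn.exists_primitive hX (k := fun x ↦ Q x * R x) (by fun_prop)
  have hIX : I X ≤ 0 := T.weighted_integral_nonpos hp hz
    (P := fun x ↦ z ^ (-p) * Q x) (ψ := fun x ↦ z * φ x) (R := R)
    (fun x hx ↦ mul_nonneg hzp.le (hQ0 x hx))
    (fun x hx y hy hxy ↦ mul_le_mul_of_nonneg_left (hQ hx hy hxy) hzp.le) (by simp [hφ0])
    (fun x hx ↦ ((hφ x hx).const_mul z).congr_deriv (by ring)) hR (fun x _ ↦ hRpos x) hI0 hI X hXX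
  have hJX : 0 ≤ J X := by
    have := monotoneOn_Icc_of_hasDerivAt_nonneg hJ
      (fun x hx ↦ mul_nonneg (hQ0 x hx) (hRpos x).le) h0X hXX hX
    rwa [hJ0] at this
  refine ⟨J X / R X, div_nonneg hJX (hRpos X).le, fun ε hε ↦ ?_⟩
  set v := fun x ↦ (z⁻¹ * I x + ε * J x) / R x with hv_def
  have hv : ∀ x ∈ Icc 0 X, HasDerivAt v (Q x * ((-p * z ^ (-p - 1) * T.s (z * φ x) +
      z ^ (-p) * (T.ds (z * φ x) * (φ x + z * v x))) + ε)) x := fun x hx ↦ by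
    refine ((((hI x hx).const_mul z⁻¹).fun_add ((hJ x hx).const_mul ε)).fun_div (hR x hx)
      (hRpos x).ne').congr_deriv ?_
    have := (hRpos x).ne'
    simp only [hv_def, Real.rpow_sub_one hz.ne']
    field_simp
    ring
  have hvc : ContinuousOn v (Icc 0 X) := fun x hx ↦ (hv x hx).continuousAt.continuousWithinAt
  set H : ℝ → ℝ → ℝ := fun τ x ↦ -p * (z + τ) ^ (-p - 1) * T.s ((z + τ) * (φ x + τ * v x)) +
    (z + τ) ^ (-p) * (T.ds ((z + τ) * (φ x + τ * v x)) * (φ x + τ * v x + (z + τ) * v x)) with hH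
  have hHc : ContinuousOn (fun y : ℝ × ℝ ↦ H y.1 y.2) (Icc 0 1 ×ˢ Icc 0 X) := by
    obtain ⟨Φ, hΦ⟩ : ∃ Φ : ℝ × ℝ → ℝ, ∀ y, φ y.2 = Φ y := ⟨_, fun _ ↦ rfl⟩
    obtain ⟨V, hV⟩ : ∃ V : ℝ × ℝ → ℝ, ∀ y, v y.2 = V y := ⟨_, fun _ ↦ rfl⟩
    have h1 : ContinuousOn Φ (Icc 0 1 ×ˢ Icc 0 X) :=
      (hφc.comp continuousOn_snd fun y hy ↦ hy.2).congr fun y _ ↦ (hΦ y).symm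
    have h2 : ContinuousOn V (Icc 0 1 ×ˢ Icc 0 X) :=
      (hvc.comp continuousOn_snd fun y hy ↦ hy.2).congr fun y _ ↦ (hV y).symm
    have h3 : ∀ e : ℝ, ContinuousOn (fun y : ℝ × ℝ ↦ (z + y.1) ^ e) (Icc 0 1 ×ˢ Icc 0 X) :=
      fun e ↦ (continuousOn_const.add continuousOn_fst).rpow_const
        fun y hy ↦ .inl (add_pos_of_pos_of_nonneg hz hy.1.1).ne'
    have h4 := h3 (-p)
    have h5 := h3 (-p - 1)
    simp only [hH, hΦ, hV]
    fun_prop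
  obtain ⟨δ₁, hδ₁, hunif⟩ := Metric.uniformContinuousOn_iff.1
    ((isCompact_Icc.prod isCompact_Icc).uniformContinuousOn_of_continuous hHc) ε hε
  refine ⟨min δ₁ 1, by positivity, fun δ hδ χ hχ0 hχ ↦ ?_⟩
  have hzδ : 0 < z + δ := by linarith [hδ.1]
  have hexp : ∀ x ∈ Icc 0 X, (z + δ) ^ (-p) * T.s ((z + δ) * (φ x + δ * v x)) ≤
      z ^ (-p) * T.s (z * φ x) + δ * (H 0 x + ε) := fun x hx ↦ by
    have hd : ∀ τ ∈ Icc 0 δ, HasDerivAt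
        (fun τ ↦ τ * (H 0 x + ε) - (z + τ) ^ (-p) * T.s ((z + τ) * (φ x + τ * v x)))
        (H 0 x + ε - H τ x) τ := fun τ hτ ↦ by
      have hzτ : z + τ ≠ 0 := by linarith [hτ.1]
      have h1 : HasDerivAt (fun τ : ℝ ↦ z + τ) 1 τ := (hasDerivAt_id τ).const_add z
      have h2 : HasDerivAt (fun τ ↦ φ x + τ * v x) (v x) τ := by
        simpa using ((hasDerivAt_id τ).mul_const (v x)).const_add (φ x)
      refine (((hasDerivAt_id τ).mul_const (H 0 x + ε)).fun_sub
        ((h1.rpow_const (p := -p) (.inl hzτ)).fun_mul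
          ((T.hasDerivAt_s hp _).comp τ (h1.fun_mul h2)))).congr_deriv ?_
      simp only [hH, Function.comp_apply]
      ring
    have := monotoneOn_Icc_of_hasDerivAt_nonneg hd (fun τ hτ ↦ by
      have h1 := hunif (τ, x) ⟨⟨hτ.1, hτ.2.trans (hδ.2.le.trans (min_le_right _ _))⟩, hx⟩ (0, x)
        ⟨by simp, hx⟩ (by
          rw [Prod.dist_eq, dist_self, max_eq_left dist_nonneg, Real.dist_eq, sub_zero,
            abs_of_nonneg hτ.1]
          exact hτ.2.trans_lt (hδ.2.trans_le (min_le_left _ _)))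
      have := (le_abs_self _).trans_lt h1
      dsimp only at this
      linarith) ⟨le_rfl, hδ.1.le⟩ ⟨hδ.1.le, le_rfl⟩ hδ.1.le
    simp only [zero_mul, add_zero] at this
    linarith
  obtain ⟨M, hM⟩ := isCompact_Icc.exists_bound_of_continuousOn hQc
  have hcmp := le_of_deriv_sub_le (K := M * ((z + δ) ^ (-p) * (p * (z + δ)))) hχ
    (fun x hx ↦ (hφ x hx).fun_add ((hv x hx).const_mul δ)) (by simp [hχ0, hφ0, hv_def, hI0, hJ0])
    (fun x hx hle ↦ by
      have h1 := mul_le_mul_of_nonneg_left (hexp x hx) (hQ0 x hx)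
      have h2 : T.s ((z + δ) * χ x) - T.s ((z + δ) * (φ x + δ * v x)) ≤
          p * (z + δ) * (χ x - (φ x + δ * v x)) := by
        refine (le_abs_self _).trans ((T.abs_s_sub_le hp _ _).trans_eq ?_)
        rw [← mul_sub, abs_mul, abs_of_pos hzδ, abs_of_nonneg (sub_nonneg.2 hle)]
        ring
      have h3 := mul_le_mul_of_nonneg_left h2 (Real.rpow_nonneg hzδ.le (-p))
      have h4 : 0 ≤ (z + δ) ^ (-p) * (p * (z + δ) * (χ x - (φ x + δ * v x))) :=
        mul_nonneg (Real.rpow_nonneg hzδ.le _)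
          (mul_nonneg (by positivity) (sub_nonneg.2 hle))
      have h5 := mul_le_mul_of_nonneg_left h3 (hQ0 x hx)
      have h6 := mul_le_mul_of_nonneg_right ((le_abs_self _).trans (hM x hx)) h4
      have h7 : H 0 x = -p * z ^ (-p - 1) * T.s (z * φ x) +
          z ^ (-p) * (T.ds (z * φ x) * (φ x + z * v x)) := by simp [hH]
      rw [h7] at h1
      linarith) X hXX
  refine hcmp.trans (add_le_add_right (mul_le_mul_of_nonneg_left ?_ hδ.1.le) _)
  rw [hv_def, ← mul_div_assoc]
  exact div_le_div_of_nonneg_right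
    (by linarith [mul_nonpos_of_nonneg_of_nonpos (inv_pos.2 hz).le hIX]) (hRpos X).le

/-- The rescaled angle `ψ / z` is decreasing in the frequency `z`. -/
theorem angle_div_le (hp : 1 < p) {Q : ℝ → ℝ} {ψ : ℝ → ℝ → ℝ} {X z₁ z₂ : ℝ} (hX : 0 ≤ X)
    (hz₁ : 0 < z₁) (hz : z₁ ≤ z₂) (hQ0 : ∀ x ∈ Icc 0 X, 0 ≤ Q x) (hQ : AntitoneOn Q (Icc 0 X))
    (hQc : ContinuousOn Q (Icc 0 X)) (hψ0 : ∀ z > 0, ψ z 0 = 0)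
    (hψ : ∀ z > 0, ∀ x ∈ Icc 0 X, HasDerivAt (ψ z) (z + z ^ (1 - p) * Q x * T.s (ψ z x)) x) :
    ψ z₂ X / z₂ ≤ ψ z₁ X / z₁ := by
  have hcont : ContinuousOn (fun z ↦ ψ z X) (Ioi 0) :=
    T.continuousOn_angle hp hX (α := id) (β := fun _ ↦ 0) (γ := fun z ↦ z ^ (1 - p)) (Q := Q)
      continuousOn_id continuousOn_const
      (continuousOn_id.rpow_const fun z hz ↦ .inl (ne_of_gt hz)) hQc hψ0
      (fun z hz x hx ↦ by simpa using hψ z hz x hx)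
  have hφ : ∀ z > 0, ∀ x ∈ Icc 0 X, HasDerivAt (fun x ↦ ψ z x / z)
      (1 + Q x * (z ^ (-p) * T.s (z * (ψ z x / z)))) x := fun z hz x hx ↦ by
    refine ((hψ z hz x hx).div_const z).congr_deriv ?_
    rw [mul_div_cancel₀ _ hz.ne', show 1 - p = -p + 1 by ring, Real.rpow_add_one hz.ne']
    field_simp
  have hsub : Icc z₁ z₂ ⊆ Ioi 0 := fun z hz ↦ hz₁.trans_le hz.1
  refine image_le_of_liminf_slope_right_le_deriv_boundary (f := fun z ↦ ψ z X / z)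
    (B := fun _ ↦ ψ z₁ X / z₁) (B' := fun _ ↦ 0)
    ((hcont.mono hsub).div continuousOn_id fun z hz ↦ ne_of_gt (hsub hz)) le_rfl
    continuousOn_const (fun _ _ ↦ hasDerivWithinAt_const _ _ _) (fun z hz' r hr ↦ ?_) ⟨hz, le_rfl⟩
  have hz0 : 0 < z := hz₁.trans_le hz'.1
  obtain ⟨C, hC, hslope⟩ := T.exists_rescaled_angle_le hp hX hz0 hQ0 hQ hQc
    (φ := fun x ↦ ψ z x / z) (by simp [hψ0 z hz0]) (hφ z hz0)
  obtain ⟨δ, hδ, hle⟩ := hslope (r / (C + 1)) (by positivity)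
  refine Eventually.frequently ?_
  filter_upwards [Ioo_mem_nhdsGT (show z < z + δ by linarith)] with w hw
  have hw0 : 0 < w := hz0.trans hw.1
  have := hle (w - z) ⟨by linarith [hw.1], by linarith [hw.2]⟩ (fun x ↦ ψ w x / w)
    (by simp [hψ0 w hw0]) (by simpa using hφ w hw0)
  rw [slope_def_field, div_lt_iff₀ (by linarith [hw.1])]
  have h1 : r / (C + 1) * C < r := by
    rw [div_mul_eq_mul_div, div_lt_iff₀ (by positivity)]
    nlinarith
  have := mul_lt_mul_of_pos_left h1 (sub_pos.2 hw.1)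
  linarith

end GeneralizedSine

section CurveFlow

variable {p q : ℝ}

theorem signedPow_eq_rpow_of_curve (h : p.HolderConjugate q) {u v : ℝ} (hv : 0 ≤ v)
    (hc : |u| ^ p + |v| ^ q = 1) : signedPow q v = (1 - |u| ^ p) ^ (1 / p) := by
  rw [← eq_sub_iff_add_eq'.2 hc, abs_of_nonneg hv, signedPow_of_nonneg h.symm.lt hv,
    ← Real.rpow_mul hv]
  congr 1
  have := h.sub_one_mul_conj
  have := h.symm.sub_one_mul_conj
  have := h.pos
  field_simp
  linarith

theorem eventually_eq_of_curve_of_pos (h : p.HolderConjugate q) {κ M x : ℝ}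
    {a b u₁ u₂ v₁ v₂ : ℝ → ℝ} (hx : x ∈ Ico (0 : ℝ) 1)
    (ha : ∀ t ∈ Icc (0 : ℝ) 1, |a t| ≤ M) (hb : ∀ t ∈ Icc (0 : ℝ) 1, |b t| ≤ M)
    (hc₁ : ∀ t ∈ Icc (0 : ℝ) 1, |u₁ t| ^ p + |v₁ t| ^ q = 1)
    (hc₂ : ∀ t ∈ Icc (0 : ℝ) 1, |u₂ t| ^ p + |v₂ t| ^ q = 1)
    (hu₁ : ∀ t ∈ Icc (0 : ℝ) 1,
      HasDerivAt u₁ (κ * (signedPow q (v₁ t) * (a t + b t * |u₁ t| ^ p))) t)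
    (hu₂ : ∀ t ∈ Icc (0 : ℝ) 1,
      HasDerivAt u₂ (κ * (signedPow q (v₂ t) * (a t + b t * |u₂ t| ^ p))) t)
    (hv₁ : ContinuousAt v₁ x) (hv₂ : ContinuousAt v₂ x)
    (hu : u₁ x = u₂ x) (hv : v₁ x = v₂ x) (hpos : 0 < v₁ x) :
    ∀ᶠ t in 𝓝[>] x, u₁ t = u₂ t ∧ v₁ t = v₂ t := by
  have hxI : x ∈ Icc (0 : ℝ) 1 := Ico_subset_Icc_self hx
  set F : ℝ → ℝ := fun y ↦ (1 - |y| ^ p) ^ (1 / p) with hF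
  have hnorm : ContDiffAt ℝ 1 (fun y : ℝ ↦ |y| ^ p) (u₁ x) :=
    (contDiff_norm_rpow (E := ℝ) h.lt).contDiffAt
  have hFd : ContDiffAt ℝ 1 F (u₁ x) := by
    refine (contDiffAt_const.sub hnorm).rpow_const_of_ne ?_
    rw [← hc₁ x hxI, add_sub_cancel_left]
    positivity
  obtain ⟨K₁, s₁, hs₁, hL₁⟩ := hFd.exists_lipschitzOnWith
  obtain ⟨K₂, s₂, hs₂, hL₂⟩ := (hFd.mul hnorm).exists_lipschitzOnWith
  have hM0 : 0 ≤ M := (abs_nonneg _).trans (ha x hxI)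
  have hev : ∀ᶠ t in 𝓝 x, 0 < v₁ t ∧ 0 < v₂ t ∧ u₁ t ∈ s₁ ∩ s₂ ∧ u₂ t ∈ s₁ ∩ s₂ := by
    refine (hv₁.eventually_const_lt hpos).and ((hv₂.eventually_const_lt (hv ▸ hpos)).and
      (((hu₁ x hxI).continuousAt.eventually (inter_mem hs₁ hs₂)).and
      ((hu₂ x hxI).continuousAt.eventually ?_)))
    rw [← hu]
    exact inter_mem hs₁ hs₂
  obtain ⟨ε, hε, hball⟩ := Metric.eventually_nhds_iff.1 hev
  set y := x + min (ε / 2) (1 - x) with hy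
  have hxy : x < y := lt_add_of_pos_right _ (lt_min (by linarith) (by linarith [hx.2]))
  have hsub : Icc x y ⊆ Icc (0 : ℝ) 1 :=
    Icc_subset_Icc hx.1 (by linarith [min_le_right (ε / 2) (1 - x)])
  have hnear : ∀ t ∈ Icc x y, 0 < v₁ t ∧ 0 < v₂ t ∧ u₁ t ∈ s₁ ∩ s₂ ∧ u₂ t ∈ s₁ ∩ s₂ :=
    fun t ht ↦ hball (by
      rw [Real.dist_eq, abs_of_nonneg (by linarith [ht.1])]
      linarith [ht.2, min_le_left (ε / 2) (1 - x)])
  have hEq : EqOn u₁ u₂ (Icc x y) := by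
    refine eqOn_of_abs_deriv_sub_le (K := |κ| * (M * K₁ + M * K₂)) (fun t ht ↦ hu₁ t (hsub ht))
      (fun t ht ↦ hu₂ t (hsub ht)) hu fun t ht ↦ ?_
    obtain ⟨h1, h2, h3, h4⟩ := hnear t ht
    rw [signedPow_eq_rpow_of_curve h h1.le (hc₁ t (hsub ht)),
      signedPow_eq_rpow_of_curve h h2.le (hc₂ t (hsub ht))]
    have e1 := hL₁.dist_le_mul _ h3.1 _ h4.1
    have e2 := hL₂.dist_le_mul _ h3.2 _ h4.2
    rw [Real.dist_eq, Real.dist_eq] at e1 e2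
    have hid : κ * ((1 - |u₁ t| ^ p) ^ (1 / p) * (a t + b t * |u₁ t| ^ p)) -
        κ * ((1 - |u₂ t| ^ p) ^ (1 / p) * (a t + b t * |u₂ t| ^ p)) =
        κ * (a t * (F (u₁ t) - F (u₂ t)) +
          b t * (F (u₁ t) * |u₁ t| ^ p - F (u₂ t) * |u₂ t| ^ p)) := by
      simp only [hF]; ring
    rw [hid, abs_mul, mul_assoc]
    refine mul_le_mul_of_nonneg_left ?_ (abs_nonneg κ)
    refine (abs_add_le _ _).trans ?_
    rw [abs_mul, abs_mul, add_mul, mul_assoc, mul_assoc]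
    exact add_le_add (mul_le_mul (ha t (hsub ht)) e1 (abs_nonneg _) hM0)
      (mul_le_mul (hb t (hsub ht)) e2 (abs_nonneg _) hM0)
  filter_upwards [Ioo_mem_nhdsGT hxy] with t ht
  have htI := Ioo_subset_Icc_self ht
  obtain ⟨h1, h2, -, -⟩ := hnear t htI
  refine ⟨hEq htI, ?_⟩
  have e1 := signedPow_eq_rpow_of_curve h h1.le (hc₁ t (hsub htI))
  rw [hEq htI, ← signedPow_eq_rpow_of_curve h h2.le (hc₂ t (hsub htI))] at e1
  rw [← signedPow_signedPow h.symm (v₁ t), e1, signedPow_signedPow h.symm]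

theorem eventually_eq_of_curve (h : p.HolderConjugate q) {κ M x : ℝ}
    {a b u₁ u₂ v₁ v₂ : ℝ → ℝ} (hx : x ∈ Ico (0 : ℝ) 1)
    (ha : ∀ t ∈ Icc (0 : ℝ) 1, |a t| ≤ M) (hb : ∀ t ∈ Icc (0 : ℝ) 1, |b t| ≤ M)
    (hc₁ : ∀ t ∈ Icc (0 : ℝ) 1, |u₁ t| ^ p + |v₁ t| ^ q = 1)
    (hc₂ : ∀ t ∈ Icc (0 : ℝ) 1, |u₂ t| ^ p + |v₂ t| ^ q = 1)
    (hu₁ : ∀ t ∈ Icc (0 : ℝ) 1,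
      HasDerivAt u₁ (κ * (signedPow q (v₁ t) * (a t + b t * |u₁ t| ^ p))) t)
    (hu₂ : ∀ t ∈ Icc (0 : ℝ) 1,
      HasDerivAt u₂ (κ * (signedPow q (v₂ t) * (a t + b t * |u₂ t| ^ p))) t)
    (hv₁ : ContinuousAt v₁ x) (hv₂ : ContinuousAt v₂ x)
    (hu : u₁ x = u₂ x) (hv : v₁ x = v₂ x) (hne : v₁ x ≠ 0) :
    ∀ᶠ t in 𝓝[>] x, u₁ t = u₂ t ∧ v₁ t = v₂ t := by
  rcases lt_or_gt_of_ne hne with hneg | hpos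
  · have := eventually_eq_of_curve_of_pos h (u₁ := -u₁) (u₂ := -u₂) (v₁ := -v₁) (v₂ := -v₂)
      (κ := κ) hx ha hb (by simpa using hc₁) (by simpa using hc₂)
      (fun t ht ↦ (hu₁ t ht).neg.congr_deriv (by simp [signedPow_neg]))
      (fun t ht ↦ (hu₂ t ht).neg.congr_deriv (by simp [signedPow_neg]))
      hv₁.neg hv₂.neg (by simp [hu]) (by simp [hv]) (by simpa using hneg)
    simpa using this
  · exact eventually_eq_of_curve_of_pos h hx ha hb hc₁ hc₂ hu₁ hu₂ hv₁ hv₂ hu hv hpos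

/-- A motion with speed `a + b |u| ^ p` along the curve `|u| ^ p + |v| ^ q = 1`. -/
structure IsCurveFlow (p q : ℝ) (a b u v : ℝ → ℝ) : Prop where
  curve : ∀ t ∈ Icc (0 : ℝ) 1, |u t| ^ p + |v t| ^ q = 1
  hasDerivAt_fst : ∀ t ∈ Icc (0 : ℝ) 1,
    HasDerivAt u (signedPow q (v t) * (a t + b t * |u t| ^ p)) t
  hasDerivAt_snd : ∀ t ∈ Icc (0 : ℝ) 1,
    HasDerivAt v (-(p - 1) * (signedPow p (u t) * (a t + b t * |u t| ^ p))) t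

theorem IsCurveFlow.eqOn (h : p.HolderConjugate q) {a b u₁ u₂ v₁ v₂ : ℝ → ℝ}
    (ha : ContinuousOn a (Icc 0 1)) (hb : ContinuousOn b (Icc 0 1))
    (h₁ : IsCurveFlow p q a b u₁ v₁) (h₂ : IsCurveFlow p q a b u₂ v₂)
    (hu : u₁ 0 = u₂ 0) (hv : v₁ 0 = v₂ 0) : EqOn u₁ u₂ (Icc 0 1) := by
  obtain ⟨A, hA⟩ := isCompact_Icc.exists_bound_of_continuousOn ha
  obtain ⟨B, hB⟩ := isCompact_Icc.exists_bound_of_continuousOn hb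
  have hA0 : 0 ≤ A := (norm_nonneg _).trans (hA 0 (by simp))
  have hB0 : 0 ≤ B := (norm_nonneg _).trans (hB 0 (by simp))
  have hcu₁ : ContinuousOn u₁ (Icc 0 1) :=
    fun t ht ↦ (h₁.hasDerivAt_fst t ht).continuousAt.continuousWithinAt
  have hcu₂ : ContinuousOn u₂ (Icc 0 1) :=
    fun t ht ↦ (h₂.hasDerivAt_fst t ht).continuousAt.continuousWithinAt
  have hcv₁ : ContinuousOn v₁ (Icc 0 1) :=
    fun t ht ↦ (h₁.hasDerivAt_snd t ht).continuousAt.continuousWithinAt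
  have hcv₂ : ContinuousOn v₂ (Icc 0 1) :=
    fun t ht ↦ (h₂.hasDerivAt_snd t ht).continuousAt.continuousWithinAt
  have hclosed : IsClosed ({t | u₁ t = u₂ t ∧ v₁ t = v₂ t} ∩ Icc (0 : ℝ) 1) := by
    have h1 := ((hcu₁.sub hcu₂).prodMk (hcv₁.sub hcv₂)).preimage_isClosed_of_isClosed isClosed_Icc
      (isClosed_singleton (x := ((0 : ℝ), (0 : ℝ))))
    convert h1 using 1
    ext t
    simp [sub_eq_zero, and_comm]
  have hall := hclosed.Icc_subset_of_forall_mem_nhdsWithin ⟨hu, hv⟩ fun x hx ↦ by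
    obtain ⟨⟨hux, hvx⟩, hx01⟩ := hx
    have hxI := Ico_subset_Icc_self hx01
    rcases eq_or_ne (v₁ x) 0 with h0 | h0
    · have hu0 : u₁ x ≠ 0 := fun h0' ↦ by
        have := h₁.curve x hxI
        simp [h0, h0', h.ne_zero, h.symm.ne_zero] at this
      have hspeed : ∀ {u v : ℝ → ℝ}, IsCurveFlow p q a b u v → ∀ t ∈ Icc (0 : ℝ) 1,
          HasDerivAt v (-(p - 1) * (signedPow p (u t) * ((a + b) t + (-b) t * |v t| ^ q))) t :=
        fun hf t ht ↦ (hf.hasDerivAt_snd t ht).congr_deriv (by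
          rw [eq_sub_iff_add_eq.2 (hf.curve t ht), Pi.add_apply, Pi.neg_apply]
          ring)
      filter_upwards [eventually_eq_of_curve h.symm (M := A + B) hx01
        (fun t ht ↦ (abs_add_le _ _).trans (add_le_add (hA t ht) (hB t ht)))
        (fun t ht ↦ (abs_neg (b t)).trans_le ((hB t ht).trans (by linarith)))
        (fun t ht ↦ (add_comm _ _).trans (h₁.curve t ht))
        (fun t ht ↦ (add_comm _ _).trans (h₂.curve t ht)) (hspeed h₁) (hspeed h₂)
        (h₁.hasDerivAt_fst x hxI).continuousAt (h₂.hasDerivAt_fst x hxI).continuousAt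
        hvx hux hu0] with t ht using ht.symm
    · exact eventually_eq_of_curve h (κ := 1) (M := A + B) hx01
        (fun t ht ↦ (hA t ht).trans (by linarith)) (fun t ht ↦ (hB t ht).trans (by linarith))
        h₁.curve h₂.curve (by simpa using h₁.hasDerivAt_fst) (by simpa using h₂.hasDerivAt_fst)
        (h₁.hasDerivAt_snd x hxI).continuousAt (h₂.hasDerivAt_snd x hxI).continuousAt hux hvx h0
  exact fun t ht ↦ (hall ht).1

end CurveFlow

theorem GeneralizedSine.isCurveFlow {p q : ℝ} (T : GeneralizedSine p) (h : p.HolderConjugate q)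
    {a : ℝ} {b θ : ℝ → ℝ}
    (hθ : ∀ x ∈ Icc (0 : ℝ) 1, HasDerivAt θ (a + b x * T.s (θ x)) x) :
    IsCurveFlow p q (fun _ ↦ a) b (fun x ↦ T.S (θ x)) (fun x ↦ signedPow p (T.C (θ x))) where
  curve x _ := by rw [abs_signedPow_rpow h, T.pythagoras]
  hasDerivAt_fst x hx := ((T.hasDerivAt_S _).comp x (hθ x hx)).congr_deriv (by
    rw [signedPow_signedPow h, GeneralizedSine.s])
  hasDerivAt_snd x hx := ((T.hasDerivAt_signedPow_C _).comp x (hθ x hx)).congr_deriv (by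
    rw [GeneralizedSine.s]; ring)

section Normalization

variable {p q a : ℝ} {B Y D : ℝ → ℝ}

theorem hasDerivAt_energy (h : p.HolderConjugate q) {x y' b : ℝ} (hY : HasDerivAt Y (a * D x) x)
    (hy : y' = -(p - 1) * (b * signedPow p (Y x)))
    (hD : HasDerivAt (fun t ↦ signedPow p (D t)) y' x) :
    HasDerivAt (fun t ↦ |Y t| ^ p + |signedPow p (D t)| ^ q)
      (p * ((a - b) * (signedPow p (Y x) * D x))) x := by
  refine ((hY.abs_rpow_signedPow h.lt).add (hD.abs_rpow_signedPow h.symm.lt)).congr_deriv ?_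
  rw [signedPow_signedPow h, hy]
  linear_combination (-(b * signedPow p (Y x) * D x)) * h.sub_one_mul_conj

theorem energy_bound (h : p.HolderConjugate q) (y d : ℝ) :
    |signedPow p y * d| ≤ |y| ^ p + |signedPow p d| ^ q := by
  have h1 := Real.young_inequality_of_nonneg (abs_nonneg d) (abs_nonneg (signedPow p y)) h
  rw [abs_signedPow_rpow h] at h1 ⊢
  have h2 : |d| ^ p / p ≤ |d| ^ p := div_le_self (by positivity) h.lt.le
  have h3 : |y| ^ p / q ≤ |y| ^ p := div_le_self (by positivity) h.symm.lt.le
  rw [abs_mul, mul_comm]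
  linarith

theorem energy_pos (h : p.HolderConjugate q) (hB : ContinuousOn B (Icc 0 1))
    (hY : ∀ x ∈ Icc (0 : ℝ) 1, HasDerivAt Y (a * D x) x)
    (hD : ∀ x ∈ Icc (0 : ℝ) 1,
      HasDerivAt (fun t ↦ signedPow p (D t)) (-(p - 1) * (B x * signedPow p (Y x))) x)
    (hne : ∃ x ∈ Icc (0 : ℝ) 1, Y x ≠ 0) :
    ∀ x ∈ Icc (0 : ℝ) 1, 0 < |Y x| ^ p + |signedPow p (D x)| ^ q := by
  obtain ⟨M, hM⟩ := isCompact_Icc.exists_bound_of_continuousOn hB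
  have hp := h.pos
  set ρ := fun x ↦ |Y x| ^ p + |signedPow p (D x)| ^ q with hρ
  have hρ0 : ∀ x, 0 ≤ ρ x := fun x ↦ by positivity
  have hρd : ∀ x ∈ Icc (0 : ℝ) 1,
      HasDerivAt ρ (p * ((a - B x) * (signedPow p (Y x) * D x))) x :=
    fun x hx ↦ hasDerivAt_energy h (hY x hx) rfl (hD x hx)
  have hbound : ∀ x ∈ Icc (0 : ℝ) 1,
      |p * ((a - B x) * (signedPow p (Y x) * D x))| ≤ p * (|a| + M) * ρ x := fun x hx ↦ by
    rw [abs_mul, abs_of_pos hp, abs_mul, mul_assoc]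
    refine mul_le_mul_of_nonneg_left ?_ hp.le
    have h1 : |a - B x| ≤ |a| + M := (abs_sub _ _).trans (add_le_add_right (hM x hx) _)
    exact mul_le_mul h1 (energy_bound h _ _) (abs_nonneg _) ((abs_nonneg _).trans h1)
  have h00 : 0 < ρ 0 := by
    refine (hρ0 0).lt_of_ne' fun h0 ↦ ?_
    obtain ⟨x, hx, hYx⟩ := hne
    have h1 := eqOn_of_abs_deriv_sub_le hρd (g := fun _ ↦ 0) (g' := fun _ ↦ 0)
      (fun x _ ↦ hasDerivAt_const _ _) h0 (fun x hx ↦ by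
        rw [sub_zero, sub_zero, abs_of_nonneg (hρ0 x)]
        exact hbound x hx) hx
    have h2 : 0 < |Y x| ^ p := by positivity
    have h3 : 0 ≤ |signedPow p (D x)| ^ q := by positivity
    simp only [hρ] at h1
    linarith
  have hmono := monotoneOn_Icc_of_hasDerivAt_nonneg (a := 0) (b := 1)
    (f := fun x ↦ ρ x * Real.exp (p * (|a| + M) * x))
    (fun x hx ↦ (hρd x hx).mul (((hasDerivAt_id x).const_mul (p * (|a| + M))).exp)) (fun x hx ↦ by
      have h1 := (neg_abs_le _).trans' (neg_le_neg (hbound x hx))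
      have h2 := Real.exp_pos (p * (|a| + M) * x)
      simp only [id, mul_one]
      nlinarith)
  intro x hx
  have h1 := hmono (by simp) hx hx.1
  simp only [mul_zero, Real.exp_zero, mul_one] at h1
  exact pos_of_mul_pos_left (h00.trans_le h1) (Real.exp_pos _).le

theorem isCurveFlow_normalize (h : p.HolderConjugate q)
    (hY : ∀ x ∈ Icc (0 : ℝ) 1, HasDerivAt Y (a * D x) x)
    (hD : ∀ x ∈ Icc (0 : ℝ) 1,
      HasDerivAt (fun t ↦ signedPow p (D t)) (-(p - 1) * (B x * signedPow p (Y x))) x)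
    (hpos : ∀ x ∈ Icc (0 : ℝ) 1, 0 < |Y x| ^ p + |signedPow p (D x)| ^ q) :
    IsCurveFlow p q (fun _ ↦ a) (fun x ↦ B x - a)
      (fun x ↦ (|Y x| ^ p + |signedPow p (D x)| ^ q) ^ (-(1 / p)) * Y x)
      (fun x ↦ (|Y x| ^ p + |signedPow p (D x)| ^ q) ^ (-(1 / q)) * signedPow p (D x)) := by
  have hp := h.ne_zero
  have hq := h.symm.ne_zero
  have hpow : ∀ {ρ r y : ℝ}, 0 < ρ → r ≠ 0 → |ρ ^ (-(1 / r)) * y| ^ r = ρ⁻¹ * |y| ^ r := by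
    intro ρ r y hρ hr
    rw [abs_mul, abs_of_pos (Real.rpow_pos_of_pos hρ _), Real.mul_rpow (by positivity)
      (abs_nonneg _), ← Real.rpow_mul hρ.le, neg_mul, one_div_mul_cancel hr, Real.rpow_neg_one]
  have hspow : ∀ {ρ r r' y : ℝ}, r.HolderConjugate r' → 0 < ρ →
      signedPow r (ρ ^ (-(1 / r)) * y) = ρ ^ (-(1 / r')) * signedPow r y := by
    intro ρ r r' y hr hρ
    rw [signedPow_mul hr.lt (by positivity), ← Real.rpow_mul hρ.le]
    congr 2
    have := hr.inv_add_inv_eq_one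
    have := hr.ne_zero
    field_simp at *
    linarith
  refine ⟨fun x hx ↦ ?_, fun x hx ↦ ?_, fun x hx ↦ ?_⟩
  · have := hpos x hx
    rw [hpow this hp, hpow this hq, ← mul_add, inv_mul_cancel₀ this.ne']
  · have hρ := hpos x hx
    have hρd := hasDerivAt_energy h (hY x hx) rfl (hD x hx)
    refine ((hρd.rpow_const (p := -(1 / p)) (.inl hρ.ne')).mul (hY x hx)).congr_deriv ?_
    rw [hspow h.symm hρ, hpow hρ hp, signedPow_signedPow h, Real.rpow_sub_one hρ.ne',
      ← signedPow_mul_self h.lt (Y x)]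
    rw [← signedPow_mul_self h.lt (Y x)] at hρ
    field_simp
    ring
  · have hρ := hpos x hx
    have hρd := hasDerivAt_energy h (hY x hx) rfl (hD x hx)
    refine ((hρd.rpow_const (p := -(1 / q)) (.inl hρ.ne')).mul (hD x hx)).congr_deriv ?_
    have hV : signedPow p (D x) * D x = |signedPow p (D x)| ^ q := by
      rw [abs_signedPow_rpow h, signedPow_mul_self h.lt]
    rw [hspow h hρ, hpow hρ hp, Real.rpow_sub_one hρ.ne']
    have hp1 : p / q = p - 1 := by
      rw [div_eq_iff hq, h.sub_one_mul_conj]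
    have e1 : p * ((a - B x) * (signedPow p (Y x) * D x)) * -(1 / q) =
      -(p - 1) * (a - B x) * signedPow p (Y x) * D x := by rw [← hp1]; ring
    rw [e1]
    have e2 : |Y x| ^ p = (|Y x| ^ p + |signedPow p (D x)| ^ q) - signedPow p (D x) * D x := by
      rw [hV]; ring
    set ρ := |Y x| ^ p + |signedPow p (D x)| ^ q
    rw [e2]
    have := hρ.ne'
    field_simp
    ring

end Normalization

/-- The endpoint of the angle of a nontrivial solution vanishing at both ends is a multiple of the
half period. -/
theorem GeneralizedSine.exists_angle_eq_int_mul {p a : ℝ} (T : GeneralizedSine p) (hp : 1 < p)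
    {B Y D θ : ℝ → ℝ} (hB : ContinuousOn B (Icc 0 1))
    (hY : ∀ x ∈ Icc (0 : ℝ) 1, HasDerivAt Y (a * D x) x)
    (hD : ∀ x ∈ Icc (0 : ℝ) 1,
      HasDerivAt (fun t ↦ signedPow p (D t)) (-(p - 1) * (B x * signedPow p (Y x))) x)
    (hY0 : Y 0 = 0) (hY1 : Y 1 = 0) (hne : ∃ x ∈ Icc (0 : ℝ) 1, Y x ≠ 0) (hθ0 : θ 0 = 0)
    (hθ : ∀ x ∈ Icc (0 : ℝ) 1, HasDerivAt θ (a + (B x - a) * T.s (θ x)) x) :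
    ∃ k : ℤ, θ 1 = k * T.halfPeriod := by
  have h := Real.HolderConjugate.conjExponent hp
  set q := p.conjExponent
  wlog hD0 : 0 ≤ D 0 generalizing Y D
  · exact this (Y := -Y) (D := -D) (fun x hx ↦ (hY x hx).neg.congr_deriv (by simp))
      (fun x hx ↦ by
        simpa [signedPow_neg, Pi.neg_def] using (hD x hx).neg) (by simp [hY0]) (by simp [hY1])
      (by simpa using hne) (by simp; linarith)
  have hpos := energy_pos h hB hY hD hne
  have hflow := isCurveFlow_normalize h hY hD hpos
  have hv0 := hflow.curve 0 (by simp)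
  have heq := hflow.eqOn h continuousOn_const (hB.sub continuousOn_const) (T.isCurveFlow h hθ)
    (by simp [hY0, hθ0, T.S_zero]) (by
      simp only [hθ0, T.C_zero]
      have hv1 : 0 ≤ (|Y 0| ^ p + |signedPow p (D 0)| ^ q) ^ (-(1 / q)) * signedPow p (D 0) :=
        mul_nonneg (Real.rpow_nonneg (hpos 0 (by simp)).le _) (signedPow_nonneg p hD0)
      simp only [hY0, mul_zero, abs_zero, Real.zero_rpow h.ne_zero, zero_add] at hv0 hv1 ⊢
      rw [abs_of_nonneg hv1] at hv0
      rw [(Real.rpow_left_inj hv1 zero_le_one h.symm.ne_zero).1 (hv0.trans (Real.one_rpow q).symm),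
        signedPow_of_nonneg hp zero_le_one, Real.one_rpow])
  refine T.S_eq_zero _ ?_
  have := heq (x := 1) (by simp)
  simpa [hY1] using this.symm

namespace GeneralizedSine

variable {p a lam : ℝ} {q θ : ℝ → ℝ} (T : GeneralizedSine p)

theorem exists_angle_eq_int_mul_of_isDirichletEigenvalue (hp : 1 < p)
    (hq : ContinuousOn q (Icc 0 1)) (ha : 0 < a) (hlam : IsDirichletEigenvalue p q 0 1 lam)
    (hθ0 : θ 0 = 0) (hθ : ∀ x ∈ Icc (0 : ℝ) 1,
      HasDerivAt θ (a + (a ^ (1 - p) * (lam - q x) - a) * T.s (θ x)) x) :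
    ∃ k : ℤ, θ 1 = k * T.halfPeriod := by
  obtain ⟨y, d, ⟨x₁, hx₁, hyx₁⟩, hy, hd, hy0, hy1⟩ := hlam
  refine T.exists_angle_eq_int_mul hp (B := fun x ↦ a ^ (1 - p) * (lam - q x))
    (Y := fun x ↦ a * y x) (D := d)
    (continuousOn_const.mul (continuousOn_const.sub hq)) (fun x hx ↦ (hy x hx).const_mul a)
    (fun x hx ↦ ?_) (by simp [hy0]) (by simp [hy1]) ⟨x₁, hx₁, mul_ne_zero ha.ne' hyx₁⟩ hθ0 hθ
  refine HasDerivAt.congr_deriv (hd x hx) ?_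
  have h1 : a ^ (1 - p) * a ^ (p - 1) = 1 := by
    rw [← Real.rpow_add ha, sub_add_sub_cancel, sub_self, Real.rpow_zero]
  rw [signedPow_mul hp ha.le, signedPow]
  linear_combination (-((p - 1) * (lam - q x) * (|y x| ^ (p - 2) * y x))) * (-h1)

theorem isDirichletEigenvalue_of_angle (hp : 1 < p) (hq : ContinuousOn q (Icc 0 1))
    (hθ0 : θ 0 = 0)
    (hθ : ∀ x ∈ Icc (0 : ℝ) 1, HasDerivAt θ (1 + (lam - q x - 1) * T.s (θ x)) x) {k : ℤ}
    (hk : θ 1 = k * T.halfPeriod) (hpos : 0 < θ 1) : IsDirichletEigenvalue p q 0 1 lam := by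
  have hϖ := T.halfPeriod_pos
  have hp0 : p ≠ 0 := by linarith
  have hθc : ContinuousOn θ (Icc 0 1) := fun x hx ↦ (hθ x hx).continuousAt.continuousWithinAt
  obtain ⟨A, -, hA⟩ := ContinuousOn.exists_primitive (zero_le_one' ℝ)
    (k := fun x ↦ -(lam - q x - 1) * T.ds (θ x) / p)
    ((((continuousOn_const.sub hq).sub continuousOn_const).neg.mul
      ((T.continuous_ds hp).comp_continuousOn hθc)).div_const p)
  refine ⟨fun x ↦ Real.exp (A x) * T.S (θ x), fun x ↦ Real.exp (A x) * T.C (θ x), ?_,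
    fun x hx ↦ ?_, fun x hx ↦ ?_, by simp [hθ0, T.S_zero], ?_⟩
  · have hk1 : (1 : ℝ) ≤ k := by
      rw [hk] at hpos
      have : (0 : ℝ) < k := pos_of_mul_pos_left hpos hϖ.le
      exact_mod_cast (Int.cast_pos.1 this : 0 < k)
    obtain ⟨x, hx, hxθ⟩ := intermediate_value_Icc zero_le_one hθc
      (show T.halfPeriod / 2 ∈ Icc (θ 0) (θ 1) by
        rw [hθ0, hk]; constructor <;> nlinarith)
    refine ⟨x, hx, mul_ne_zero (Real.exp_ne_zero _) fun h ↦ ?_⟩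
    have := T.s_half hp
    rw [← hxθ, s, h, abs_zero, Real.zero_rpow hp0] at this
    exact zero_ne_one this
  · refine ((hA x hx).exp.mul ((T.hasDerivAt_S _).comp x (hθ x hx))).congr_deriv ?_
    simp only [Function.comp_apply, ds, s, ← signedPow_mul_self hp (T.S (θ x))]
    field_simp
    ring
  · have h1 : (fun t ↦ |Real.exp (A t) * T.C (θ t)| ^ (p - 2) * (Real.exp (A t) * T.C (θ t))) =
        fun t ↦ Real.exp ((p - 1) * A t) * signedPow p (T.C (θ t)) := by
      funext t
      rw [mul_comm (p - 1), Real.exp_mul]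
      exact signedPow_mul hp (Real.exp_pos _).le _
    have h2 : |Real.exp (A x) * T.S (θ x)| ^ (p - 2) * (Real.exp (A x) * T.S (θ x)) =
        Real.exp ((p - 1) * A x) * signedPow p (T.S (θ x)) := by
      rw [mul_comm (p - 1), Real.exp_mul]
      exact signedPow_mul hp (Real.exp_pos _).le _
    rw [h1, h2]
    refine (((hA x hx).const_mul (p - 1)).exp.fun_mul
      ((T.hasDerivAt_signedPow_C _).comp x (hθ x hx))).congr_deriv ?_
    have h3 := T.abs_C_rpow (θ x)
    rw [← signedPow_mul_self hp] at h3
    simp only [Function.comp_apply, ds]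
    field_simp
    linear_combination (-((p - 1) * (lam - q x - 1) * signedPow p (T.S (θ x)))) * h3
  · have h := T.s_int_mul hp k
    rw [← hk, s, Real.rpow_eq_zero (abs_nonneg _) hp0, abs_eq_zero] at h
    simp [h]

end GeneralizedSine

namespace GeneralizedSine

section Comparison

variable {p : ℝ} (T : GeneralizedSine p) {b b₁ b₂ θ θ₁ θ₂ : ℝ → ℝ}

theorem angle_pos (hp : 1 < p) (hb : ContinuousOn b (Icc 0 1)) (hθ0 : θ 0 = 0)
    (hθ : ∀ x ∈ Icc (0 : ℝ) 1, HasDerivAt θ (1 + b x * T.s (θ x)) x) : 0 < θ 1 := by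
  obtain ⟨M, hM⟩ := isCompact_Icc.exists_bound_of_continuousOn hb
  have hM0 : 0 ≤ M := (norm_nonneg _).trans (hM 0 (by simp))
  have hbd : ∀ x ∈ Icc (0 : ℝ) 1, -(M * (p * |θ x|)) ≤ b x * T.s (θ x) := fun x hx ↦ by
    refine neg_le_of_abs_le ?_
    have h1 := T.abs_s_sub_le hp (θ x) 0
    rw [T.s_zero hp, sub_zero, sub_zero] at h1
    rw [abs_mul]
    exact mul_le_mul (hM x hx) h1 (abs_nonneg _) hM0
  have hnn := le_of_deriv_sub_le (K := M * p) (fun x _ ↦ hasDerivAt_const x (0 : ℝ)) hθ hθ0.ge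
    (fun x hx h ↦ by
      have := hbd x hx
      rw [abs_of_nonpos h] at this
      linarith)
  have hmono := monotoneOn_Icc_of_hasDerivAt_nonneg (a := 0) (b := 1)
    (f := fun x ↦ θ x * Real.exp (M * p * x) - x)
    (fun x hx ↦ ((hθ x hx).mul (((hasDerivAt_id x).const_mul (M * p)).exp)).sub (hasDerivAt_id x))
    (fun x hx ↦ by
      have h1 := hbd x hx
      rw [abs_of_nonneg (hnn x hx)] at h1
      have h2 : 1 ≤ Real.exp (M * p * x) :=
        Real.one_le_exp (mul_nonneg (mul_nonneg hM0 (by linarith)) hx.1)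
      simp only [id, mul_one]
      nlinarith)
  have h1 := hmono (by simp) (by simp) (zero_le_one' ℝ)
  simp only [hθ0] at h1
  exact pos_of_mul_pos_left (by linarith : 0 < θ 1 * Real.exp (M * p * 1)) (Real.exp_pos _).le

theorem angle_le_half (hp : 1 < p) (hb : ∀ x ∈ Icc (0 : ℝ) 1, b x ≤ -1) (hθ0 : θ 0 = 0)
    (hθ : ∀ x ∈ Icc (0 : ℝ) 1, HasDerivAt θ (1 + b x * T.s (θ x)) x) :
    θ 1 ≤ T.halfPeriod / 2 := by
  have hϖ := T.halfPeriod_pos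
  refine le_of_deriv_sub_le (K := p) hθ (fun x _ ↦ hasDerivAt_const x (T.halfPeriod / 2))
    (by linarith) (fun x hx h ↦ ?_) 1 (by simp)
  have h1 := (le_abs_self _).trans (T.abs_s_sub_le hp (T.halfPeriod / 2) (θ x))
  rw [T.s_half hp, abs_sub_comm, abs_of_nonneg (sub_nonneg.2 h)] at h1
  nlinarith [hb x hx, T.s_nonneg (θ x)]

theorem angle_lt_angle (hp : 1 < p) (hb₁ : ContinuousOn b₁ (Icc 0 1)) {c : ℝ} (hc : 0 < c)
    (hb : ∀ x ∈ Icc (0 : ℝ) 1, b₂ x = b₁ x + c) (h₁0 : θ₁ 0 = 0) (h₂0 : θ₂ 0 = 0)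
    (h₁ : ∀ x ∈ Icc (0 : ℝ) 1, HasDerivAt θ₁ (1 + b₁ x * T.s (θ₁ x)) x)
    (h₂ : ∀ x ∈ Icc (0 : ℝ) 1, HasDerivAt θ₂ (1 + b₂ x * T.s (θ₂ x)) x) : θ₁ 1 < θ₂ 1 := by
  obtain ⟨M, hM⟩ := isCompact_Icc.exists_bound_of_continuousOn hb₁
  have hM0 : 0 ≤ M := (norm_nonneg _).trans (hM 0 (by simp))
  have hbd : ∀ x ∈ Icc (0 : ℝ) 1,
      |b₁ x * (T.s (θ₁ x) - T.s (θ₂ x))| ≤ M * (p * |θ₁ x - θ₂ x|) := fun x hx ↦ by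
    rw [abs_mul]
    exact mul_le_mul (hM x hx) (T.abs_s_sub_le hp _ _) (abs_nonneg _) hM0
  have hle := le_of_deriv_sub_le (K := M * p) h₁ h₂ (h₁0.trans h₂0.symm).le (fun x hx h ↦ by
    have h1 := (le_abs_self _).trans (hbd x hx)
    rw [abs_of_nonneg (sub_nonneg.2 h)] at h1
    rw [hb x hx]
    nlinarith [T.s_nonneg (θ₂ x)])
  refine (hle 1 (by simp)).lt_of_ne fun heq ↦ ?_
  have hmono := monotoneOn_Icc_of_hasDerivAt_nonneg (a := 0) (b := 1)
    (f := fun x ↦ (θ₂ x - θ₁ x) * Real.exp (M * p * x))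
    (fun x hx ↦ ((h₂ x hx).sub (h₁ x hx)).fun_mul (((hasDerivAt_id x).const_mul (M * p)).exp))
    (fun x hx ↦ by
      have h1 := (le_abs_self _).trans (hbd x hx)
      rw [abs_of_nonpos (sub_nonpos.2 (hle x hx))] at h1
      have h2 := Real.exp_pos (M * p * x)
      have h3 := mul_nonneg hc.le (T.s_nonneg (θ₂ x))
      simp only [id, mul_one, hb x hx, Pi.sub_apply]
      nlinarith)
  have hEq : EqOn θ₁ θ₂ (Icc 0 1) := fun x hx ↦ by
    have h1 := hmono hx (by simp) hx.2
    simp only [heq, sub_self, zero_mul] at h1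
    have := nonpos_of_mul_nonpos_left h1 (Real.exp_pos _)
    exact le_antisymm (hle x hx) (by linarith)
  have hs : ∀ x ∈ Icc (0 : ℝ) (1 / 2), T.s (θ₂ x) = 0 := fun x hx ↦ by
    rcases hx.1.eq_or_lt with rfl | hx0
    · rw [h₂0, T.s_zero hp]
    have hx' : x ∈ Icc (0 : ℝ) 1 := ⟨hx0.le, by linarith [hx.2]⟩
    have h1 := (h₂ x hx').congr_of_eventuallyEq
      (hEq.eventuallyEq_of_mem (Icc_mem_nhds hx0 (by linarith [hx.2])))
    have h3 := (h₁ x hx').unique h1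
    rw [hb x hx', hEq hx'] at h3
    exact (mul_eq_zero.1 (by linarith : c * T.s (θ₂ x) = 0)).resolve_left hc.ne'
  have hid := eqOn_of_abs_deriv_sub_le (K := 0) (a := 0) (b := 1 / 2)
    (fun x hx ↦ h₂ x ⟨hx.1, by linarith [hx.2]⟩) (fun x _ ↦ hasDerivAt_id x) h₂0
    (fun x hx ↦ by simp [hs x hx])
  have hϖ := T.halfPeriod_pos
  set x := min 1 T.halfPeriod / 2 with hxdef
  have hx0 : 0 < x := by positivity
  have hx1 : x ≤ 1 / 2 := by have := min_le_left 1 T.halfPeriod; linarith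
  have hx2 : x < T.halfPeriod := by have := min_le_right 1 T.halfPeriod; linarith
  obtain ⟨k, hk⟩ := T.s_eq_zero hp (hs x ⟨hx0.le, hx1⟩)
  rw [hid ⟨hx0.le, hx1⟩, id] at hk
  rw [hk] at hx0 hx2
  have h1 : (0 : ℝ) < k := pos_of_mul_pos_left hx0 hϖ.le
  have h2 : (k : ℝ) < 1 := by
    by_contra! h
    nlinarith
  have h3 : 0 < k := by exact_mod_cast h1
  have h4 : k < 1 := by exact_mod_cast h2
  omega

end Comparison

end GeneralizedSine

theorem eq_self_of_injOn_of_initial_segment {κ : ℕ → ℕ} (hinj : InjOn κ {n | 1 ≤ n})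
    (hpos : ∀ n, 1 ≤ n → 1 ≤ κ n)
    (hsurj : ∀ n, 1 ≤ n → ∀ k, 1 ≤ k → k ≤ κ n → ∃ g, 1 ≤ g ∧ g ≤ n ∧ κ g = k) :
    ∀ n, 1 ≤ n → κ n = n := by
  intro n
  induction n using Nat.strong_induction_on with
  | _ n ih =>
    intro hn
    rcases lt_trichotomy (κ n) n with h | h | h
    · exact hinj (hpos n hn) hn (ih _ h (hpos n hn))
    · exact h
    · obtain ⟨g, hg, hgn, hκ⟩ := hsurj n hn n hn h.le
      rcases hgn.eq_or_lt with rfl | hlt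
      · exact hκ
      · have := ih g hlt hg
        omega

namespace GeneralizedSine

section Spectrum

variable {p : ℝ} (T : GeneralizedSine p) {q : ℝ → ℝ}

theorem eqOn_angle (hp : 1 < p) {a : ℝ} {b θ φ : ℝ → ℝ} (hb : ContinuousOn b (Icc 0 1))
    (h0 : θ 0 = φ 0) (hθ : ∀ x ∈ Icc (0 : ℝ) 1, HasDerivAt θ (a + b x * T.s (θ x)) x)
    (hφ : ∀ x ∈ Icc (0 : ℝ) 1, HasDerivAt φ (a + b x * T.s (φ x)) x) :
    EqOn θ φ (Icc 0 1) := by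
  obtain ⟨M, hM⟩ := isCompact_Icc.exists_bound_of_continuousOn hb
  refine eqOn_of_abs_deriv_sub_le (K := M * p) hθ hφ h0 fun x hx ↦ ?_
  rw [add_sub_add_left_eq_sub, ← mul_sub, abs_mul, mul_assoc]
  exact mul_le_mul (hM x hx) (T.abs_s_sub_le hp _ _) (abs_nonneg _)
    ((norm_nonneg _).trans (hM x hx))

/-- At an eigenvalue the final angle does not depend on the frequency of the angular variable. -/
theorem angle_eq_of_isDirichletEigenvalue (hp : 1 < p) (hq : ContinuousOn q (Icc 0 1)) {lam : ℝ}
    (hlam : IsDirichletEigenvalue p q 0 1 lam) {ψ : ℝ → ℝ → ℝ} (hψ0 : ∀ a, ψ a 0 = 0)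
    (hψ : ∀ a, ∀ x ∈ Icc (0 : ℝ) 1,
      HasDerivAt (ψ a) (a + (a ^ (1 - p) * (lam - q x) - a) * T.s (ψ a x)) x) {a a' : ℝ}
    (ha : 0 < a) (ha' : 0 < a') : ψ a 1 = ψ a' 1 := by
  have hϖ := T.halfPeriod_pos
  have hrpow : ContinuousOn (fun a : ℝ ↦ a ^ (1 - p)) (Ioi 0) :=
    continuousOn_id.rpow_const fun z hz ↦ .inl (ne_of_gt hz)
  have hc : ContinuousOn (fun a ↦ ψ a 1) (Ioi 0) :=
    T.continuousOn_angle hp zero_le_one (α := id) (β := fun a ↦ a ^ (1 - p) * lam - a)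
      (γ := fun a ↦ a ^ (1 - p)) (Q := fun x ↦ -q x) continuousOn_id
      ((hrpow.mul continuousOn_const).sub continuousOn_id) hrpow hq.neg (fun a _ ↦ hψ0 a)
      (fun a _ x hx ↦ (hψ a x hx).congr_deriv (by simp only [id]; ring))
  have hdisc : DiscreteTopology (range ((↑) : ℤ → ℝ)) :=
    Int.isClosedEmbedding_coe_real.isEmbedding.toHomeomorph.symm.isEmbedding.discreteTopology
  have h := isPreconnected_Ioi.constant_of_mapsTo ⟨hdisc⟩ (hc.div_const T.halfPeriod)
    (T := range ((↑) : ℤ → ℝ)) (fun a ha ↦ by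
      obtain ⟨k, hk⟩ := T.exists_angle_eq_int_mul_of_isDirichletEigenvalue hp hq ha hlam (hψ0 a)
        (hψ a)
      exact ⟨k, by simp only [hk]; rw [mul_div_cancel_right₀ _ hϖ.ne']⟩) ha ha'
  exact (div_left_inj' hϖ.ne').1 h

/-- The `n`-th eigenvalue is the one whose final angle is `n` half periods. -/
theorem angle_eigenvalue_eq (hp : 1 < p) (hq : ContinuousOn q (Icc 0 1)) {Λ : ℕ → ℝ}
    (hΛ : StrictMonoOn Λ {n | 1 ≤ n})
    (hEig : ∀ n : ℕ, 1 ≤ n → IsDirichletEigenvalue p q 0 1 (Λ n))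
    (hAll : ∀ μ : ℝ, IsDirichletEigenvalue p q 0 1 μ → ∃ n : ℕ, 1 ≤ n ∧ μ = Λ n)
    {θ : ℝ → ℝ → ℝ} (hθ0 : ∀ lam, θ lam 0 = 0)
    (hθ : ∀ lam, ∀ x ∈ Icc (0 : ℝ) 1,
      HasDerivAt (θ lam) (1 + (lam - q x - 1) * T.s (θ lam x)) x) {n : ℕ} (hn : 1 ≤ n) :
    θ (Λ n) 1 = n * T.halfPeriod := by
  have hϖ := T.halfPeriod_pos
  have hbc : ∀ lam, ContinuousOn (fun x ↦ lam - q x - 1) (Icc 0 1) := fun lam ↦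
    (continuousOn_const.sub hq).sub continuousOn_const
  have hpos : ∀ lam, 0 < θ lam 1 := fun lam ↦ T.angle_pos hp (hbc lam) (hθ0 lam) (hθ lam)
  have hmono : StrictMono fun lam ↦ θ lam 1 := fun l₁ l₂ hl ↦
    T.angle_lt_angle hp (hbc l₁) (sub_pos.2 hl) (fun x _ ↦ by ring) (hθ0 l₁) (hθ0 l₂) (hθ l₁)
      (hθ l₂)
  have hcont : Continuous fun lam ↦ θ lam 1 := continuousOn_univ.1 <|
    T.continuousOn_angle hp zero_le_one (α := fun _ ↦ 1) (β := fun lam ↦ lam - 1)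
      (γ := fun _ ↦ 1) (Q := fun x ↦ -q x) continuousOn_const
      (continuousOn_id.sub continuousOn_const) continuousOn_const hq.neg (fun a _ ↦ hθ0 a)
      (fun a _ x hx ↦ (hθ a x hx).congr_deriv (by ring))
  obtain ⟨M, hM⟩ := isCompact_Icc.exists_bound_of_continuousOn hq
  have hlow : θ (-M) 1 ≤ T.halfPeriod / 2 := T.angle_le_half hp
    (fun x hx ↦ by linarith [(abs_le.1 (hM x hx)).1]) (hθ0 _) (hθ _)
  have hnum : ∀ n, 1 ≤ n → ∃ k : ℕ, 1 ≤ k ∧ θ (Λ n) 1 = k * T.halfPeriod := fun n hn ↦ by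
    obtain ⟨k, hk⟩ := T.exists_angle_eq_int_mul_of_isDirichletEigenvalue hp hq one_pos (hEig n hn)
      (hθ0 _) (fun x hx ↦ (hθ _ x hx).congr_deriv (by rw [Real.one_rpow, one_mul]))
    have h1 := hpos (Λ n)
    rw [hk] at h1
    have h2 : (0 : ℝ) < k := pos_of_mul_pos_left h1 hϖ.le
    have h3 : 0 < k := by exact_mod_cast h2
    lift k to ℕ using h3.le
    exact ⟨k, by exact_mod_cast h3, by exact_mod_cast hk⟩
  choose! κ hκ1 hκ using hnum
  have key := eq_self_of_injOn_of_initial_segment (κ := κ) (fun i hi j hj hij ↦ ?_) hκ1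
    (fun i hi k hk hki ↦ ?_) n hn
  · rw [hκ n hn, key]
  · refine hΛ.injOn hi hj (hmono.injective ?_)
    simp only [hκ i hi, hκ j hj, hij]
  · have hkϖ : T.halfPeriod ≤ k * T.halfPeriod :=
      le_mul_of_one_le_left hϖ.le (by exact_mod_cast hk)
    have hkΛ : (k : ℝ) * T.halfPeriod ≤ θ (Λ i) 1 := by
      rw [hκ i hi]
      exact mul_le_mul_of_nonneg_right (by exact_mod_cast hki) hϖ.le
    have hMi : -M ≤ Λ i := hmono.le_iff_le.1 (by linarith)
    obtain ⟨μ, -, hμ⟩ := intermediate_value_Icc hMi hcont.continuousOn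
      (show (k : ℝ) * T.halfPeriod ∈ Icc (θ (-M) 1) (θ (Λ i) 1) from ⟨by linarith, hkΛ⟩)
    simp only at hμ
    obtain ⟨g, hg, rfl⟩ := hAll μ (T.isDirichletEigenvalue_of_angle hp hq (hθ0 μ) (hθ μ)
      (k := k) (by exact_mod_cast hμ) (hpos μ))
    refine ⟨g, hg, (hΛ.le_iff_le hg hi).1 (hmono.le_iff_le.1 (hμ.trans_le hkΛ)), ?_⟩
    rw [hκ g hg] at hμ
    exact_mod_cast mul_right_cancel₀ hϖ.ne' hμ

end Spectrum

end GeneralizedSine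

namespace GeneralizedSine

variable {p : ℝ} (T : GeneralizedSine p) {q : ℝ → ℝ} {Λ : ℕ → ℝ}

theorem angle_rpow_eigenvalue_eq (hp : 1 < p) (hq : ContinuousOn q (Icc 0 1))
    (hΛ : StrictMonoOn Λ {n | 1 ≤ n})
    (hEig : ∀ n : ℕ, 1 ≤ n → IsDirichletEigenvalue p q 0 1 (Λ n))
    (hAll : ∀ μ : ℝ, IsDirichletEigenvalue p q 0 1 μ → ∃ n : ℕ, 1 ≤ n ∧ μ = Λ n)
    {n : ℕ} (hn : 1 ≤ n) (hpos : 0 < Λ n) {φ : ℝ → ℝ} (hφ0 : φ 0 = 0)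
    (hφ : ∀ x ∈ Icc (0 : ℝ) 1, HasDerivAt φ
      (Λ n ^ (1 / p) + (Λ n ^ (1 / p)) ^ (1 - p) * -q x * T.s (φ x)) x) :
    φ 1 = n * T.halfPeriod := by
  have hbc : ∀ lam a : ℝ, ContinuousOn (fun x ↦ a ^ (1 - p) * (lam - q x) - a) (Icc 0 1) :=
    fun lam a ↦ (continuousOn_const.mul (continuousOn_const.sub hq)).sub continuousOn_const
  choose ψ hψ0 hψ using fun lam a ↦ T.exists_angle hp a (hbc lam a)
  have hz : 0 < Λ n ^ (1 / p) := Real.rpow_pos_of_pos hpos _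
  have hzΛ : (Λ n ^ (1 / p)) ^ (1 - p) * Λ n = Λ n ^ (1 / p) := by
    nth_rewrite 2 [show Λ n = (Λ n ^ (1 / p)) ^ p by
      rw [← Real.rpow_mul hpos.le, one_div_mul_cancel (by linarith), Real.rpow_one]]
    rw [← Real.rpow_add hz, sub_add_cancel, Real.rpow_one]
  have h1 := T.angle_eigenvalue_eq hp hq hΛ hEig hAll (θ := fun lam ↦ ψ lam 1)
    (fun lam ↦ hψ0 lam 1) (fun lam x hx ↦ (hψ lam 1 x hx).congr_deriv (by
      rw [Real.one_rpow, one_mul])) hn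
  have h2 := T.angle_eq_of_isDirichletEigenvalue hp hq (hEig n hn) (hψ0 (Λ n)) (hψ (Λ n)) hz
    one_pos
  have h3 := T.eqOn_angle hp (hbc (Λ n) _) (hφ0.trans (hψ0 (Λ n) _).symm)
    (fun x hx ↦ (hφ x hx).congr_deriv (by linear_combination (-T.s (φ x)) * hzΛ)) (hψ (Λ n) _)
  rw [h3 (by simp), h2, h1]

theorem angle_add_reflected_angle (hp : 1 < p) {z : ℝ} {Q L R : ℝ → ℝ}
    (hQ : ContinuousOn Q (Icc 0 1)) (hR0 : R 0 = 0)
    (hL : ∀ x ∈ Icc (0 : ℝ) 1, HasDerivAt L (z + Q x * T.s (L x)) x)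
    (hR : ∀ x ∈ Icc (0 : ℝ) 1, HasDerivAt R (z + Q (1 - x) * T.s (R x)) x)
    {n : ℕ} (hL1 : L 1 = n * T.halfPeriod) {x : ℝ} (hx : x ∈ Icc (0 : ℝ) 1) :
    L x + R (1 - x) = n * T.halfPeriod := by
  have hmem : ∀ x ∈ Icc (0 : ℝ) 1, 1 - x ∈ Icc (0 : ℝ) 1 := fun x hx ↦
    ⟨by linarith [hx.2], by linarith [hx.1]⟩
  have h := T.eqOn_angle hp (b := fun x ↦ Q (1 - x)) (φ := fun x ↦ n * T.halfPeriod - L (1 - x))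
    (hQ.comp (by fun_prop) hmem) (by simp [hR0, hL1]) hR
    (fun x hx ↦ ((HasDerivAt.comp x (hL _ (hmem x hx))
      ((hasDerivAt_id x).const_sub 1)).const_sub (n * T.halfPeriod)).congr_deriv (by
        have h1 := T.s_periodic.nat_mul n (-L (1 - x))
        rw [neg_add_eq_sub, T.s_neg] at h1
        rw [h1]
        ring))
  have h1 := h (hmem x hx)
  simp only [sub_sub_cancel] at h1
  linarith

end GeneralizedSine

/-- for nonpositive single-barrier potentials,
λ_n/λ_m ≥ n^p/m^p whenever λ_n > λ_m ≥ -2q*. -/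
theorem eigenvalue_ratio_lower_bound
    (p : ℝ) (hp : 1 < p)
    (q : ℝ → ℝ) (hqc : ContinuousOn q (Set.Icc 0 1))
    (hqneg : ∀ x ∈ Set.Icc (0:ℝ) 1, q x ≤ 0)
    (x0 : ℝ) (hx0 : x0 ∈ Set.Icc (0:ℝ) 1)
    (hmono : MonotoneOn q (Set.Icc 0 x0)) (hanti : AntitoneOn q (Set.Icc x0 1))
    (Λ : ℕ → ℝ) (hΛmono : StrictMonoOn Λ {n | 1 ≤ n})
    (hEig : ∀ n : ℕ, 1 ≤ n → IsDirichletEigenvalue p q 0 1 (Λ n))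
    (hAll : ∀ μ : ℝ, IsDirichletEigenvalue p q 0 1 μ → ∃ n : ℕ, 1 ≤ n ∧ μ = Λ n) :
    ∀ m n : ℕ, 1 ≤ m → m < n →
      -2 * min (q 0) (q 1) ≤ Λ m → Λ m < Λ n →
      (n : ℝ) ^ p / (m : ℝ) ^ p ≤ Λ n / Λ m := by
  intro m n hm hmn hΛm hΛmn
  obtain ⟨T⟩ := GeneralizedSine.nonempty hp
  have hϖ := T.halfPeriod_pos
  have hn : 1 ≤ n := hm.trans hmn.le
  have hm0 : (0 : ℝ) < m := by exact_mod_cast hm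
  have hsub : ∀ x ∈ Icc (0 : ℝ) 1, 1 - x ∈ Icc (0 : ℝ) 1 := fun x hx ↦
    ⟨by linarith [hx.2], by linarith [hx.1]⟩
  have hΛ0 : 0 < Λ m := by
    have h0 := hqneg 0 (by simp)
    have h1 := hqneg 1 (by simp)
    have hmin : min (q 0) (q 1) ≤ 0 := (min_le_left _ _).trans h0
    refine (by linarith : 0 ≤ Λ m).lt_of_ne' fun hΛ ↦ ?_
    have hq0 : 0 ≤ min (q 0) (q 1) := by linarith
    have hq : ∀ x ∈ Icc (0 : ℝ) 1, 0 ≤ q x := fun x hx ↦ by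
      rcases le_total x x0 with h | h
      · exact (le_min_iff.1 hq0).1.trans (hmono ⟨le_rfl, hx0.1⟩ ⟨hx.1, h⟩ hx.1)
      · exact (le_min_iff.1 hq0).2.trans (hanti ⟨h, hx.2⟩ ⟨hx0.2, le_rfl⟩ hx.2)
    have hbc : ContinuousOn (fun x ↦ Λ m - q x - 1) (Icc 0 1) :=
      (continuousOn_const.sub hqc).sub continuousOn_const
    obtain ⟨θ, hθ0, hθ⟩ := T.exists_angle hp 1 hbc
    have h2 := T.angle_le_half hp (fun x hx ↦ by linarith [hq x hx]) hθ0 hθ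
    have h3 := T.angle_pos hp hbc hθ0 hθ
    obtain ⟨k, hk⟩ := T.exists_angle_eq_int_mul_of_isDirichletEigenvalue hp hqc one_pos
      (hEig m hm) hθ0 (fun x hx ↦ (hθ x hx).congr_deriv (by rw [Real.one_rpow, one_mul]))
    rw [hk] at h2 h3
    have h4 : (0 : ℝ) < k := pos_of_mul_pos_left h3 hϖ.le
    have h5 : (1 : ℝ) ≤ k := by exact_mod_cast (Int.cast_pos.1 h4 : 0 < k)
    nlinarith
  have hΛn0 := hΛ0.trans hΛmn
  have hQc : ∀ z : ℝ, ContinuousOn (fun x ↦ z ^ (1 - p) * -q x) (Icc 0 1) := fun z ↦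
    continuousOn_const.mul hqc.neg
  have hRc : ContinuousOn (fun x ↦ -q (1 - x)) (Icc 0 1) := (hqc.comp (by fun_prop) hsub).neg
  choose L hL0 hL using fun z ↦ T.exists_angle hp z (hQc z)
  choose R hR0 hR using fun z ↦ T.exists_angle hp z
    (continuousOn_const.mul hRc : ContinuousOn (fun x ↦ z ^ (1 - p) * -q (1 - x)) (Icc 0 1))
  have hsum : ∀ k, 1 ≤ k → 0 < Λ k →
      L (Λ k ^ (1 / p)) x0 + R (Λ k ^ (1 / p)) (1 - x0) = k * T.halfPeriod := fun k hk hΛk ↦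
    T.angle_add_reflected_angle hp (hQc _) (hR0 _) (hL _) (hR _)
      (T.angle_rpow_eigenvalue_eq hp hqc hΛmono hEig hAll hk hΛk (hL0 _) (hL _)) hx0
  have hz : 0 < Λ m ^ (1 / p) := Real.rpow_pos_of_pos hΛ0 _
  have hzn : 0 < Λ n ^ (1 / p) := Real.rpow_pos_of_pos hΛn0 _
  have hzz : Λ m ^ (1 / p) ≤ Λ n ^ (1 / p) :=
    Real.rpow_le_rpow hΛ0.le hΛmn.le (one_div_nonneg.2 (by linarith))
  have hL' := T.angle_div_le hp (Q := fun x ↦ -q x) (ψ := L) (X := x0) hx0.1 hz hzz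
    (fun x hx ↦ neg_nonneg.2 (hqneg x ⟨hx.1, hx.2.trans hx0.2⟩)) hmono.neg
    (hqc.neg.mono (Icc_subset_Icc_right hx0.2)) (fun z _ ↦ hL0 z)
    (fun z _ x hx ↦ hL z x ⟨hx.1, hx.2.trans hx0.2⟩)
  have hX : 0 ≤ 1 - x0 := sub_nonneg.2 hx0.2
  have hX1 : 1 - x0 ≤ 1 := by linarith [hx0.1]
  have hR' := T.angle_div_le hp (Q := fun x ↦ -q (1 - x)) (ψ := R) (X := 1 - x0) hX hz hzz
    (fun x hx ↦ neg_nonneg.2 (hqneg _ (hsub x ⟨hx.1, hx.2.trans hX1⟩)))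
    (fun x hx y hy hxy ↦ neg_le_neg (hanti ⟨by linarith [hy.2], by linarith [hy.1]⟩
      ⟨by linarith [hx.2], by linarith [hx.1]⟩ (by linarith)))
    (hRc.mono (Icc_subset_Icc_right hX1)) (fun z _ ↦ hR0 z)
    (fun z _ x hx ↦ hR z x ⟨hx.1, hx.2.trans hX1⟩)
  have key := add_le_add hL' hR'
  rw [← add_div, ← add_div, hsum m hm hΛ0, hsum n hn hΛn0, div_le_div_iff₀ hzn hz] at key
  have key' : (n : ℝ) / m ≤ (Λ n / Λ m) ^ (1 / p) := by
    rw [Real.div_rpow hΛn0.le hΛ0.le, div_le_div_iff₀ hm0 hz]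
    nlinarith
  rw [← Real.div_rpow n.cast_nonneg hm0.le]
  calc ((n : ℝ) / m) ^ p ≤ ((Λ n / Λ m) ^ (1 / p)) ^ p :=
        Real.rpow_le_rpow (by positivity) key' (by linarith)
    _ = Λ n / Λ m := by
        rw [← Real.rpow_mul (by positivity), one_div_mul_cancel (by linarith), Real.rpow_one]
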